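/- arXiv:1912.06230 — 2 statements merged into one kernel-verified Lean document; each statement's English description precedes it below -/
import Mathlib

section
/- Let k be a G-graded field and A a finitely generated graded k-algebra that is a graded domain. Then the graded integral closure of A in its graded fraction field K = Frac_G(A) is finite as an A-module, and in particular is a finitely generated graded k-algebra. -/
universe u v

/-- A `G`-graded commutative ring structure on `A`: graded pieces `deg g`,
multiplicativity of the grading, and an internal direct sum decomposition
recorded by the homogeneous-component function `comp`. -/
structure GradedStr (G : Type u) [CommGroup G] (A : Type v) [CommRing A] where
  deg : G → AddSubgroup A
  one_mem : (1 : A) ∈ deg 1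
  mul_mem : ∀ {g h : G} {a b : A}, a ∈ deg g → b ∈ deg h → a * b ∈ deg (g * h)
  comp : A → G → A
  comp_mem : ∀ a g, comp a g ∈ deg g
  comp_add : ∀ a b g, comp (a + b) g = comp a g + comp b g
  comp_of_mem : ∀ {a : A} {g : G}, a ∈ deg g → comp a g = a
  comp_of_mem_ne : ∀ {a : A} {g g' : G}, a ∈ deg g → g' ≠ g → comp a g' = 0
  finite_support : ∀ a : A, (Function.support (comp a)).Finite
  sum_comp : ∀ a : A, ∑ᶠ g, comp a g = a

namespace GradedStr

variable {G : Type u} [CommGroup G] {A : Type v} [CommRing A]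

/-- `a` is homogeneous: it lies in some graded piece. -/
def IsHomog (𝒜 : GradedStr G A) (a : A) : Prop := ∃ g, a ∈ 𝒜.deg g

/-- A `G`-graded field: a nonzero graded ring in which every nonzero homogeneous
element is invertible. -/
def IsGradedField (𝒜 : GradedStr G A) : Prop :=
  Nontrivial A ∧ ∀ a : A, 𝒜.IsHomog a → a ≠ 0 → IsUnit a

/-- A graded subring: a subring stable under taking homogeneous components. -/
def IsGradedSubring (𝒜 : GradedStr G A) (S : Subring A) : Prop :=
  ∀ x ∈ S, ∀ g, 𝒜.comp x g ∈ S

/-- A graded subfield of a graded field: a graded subring containing the inverses of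
its nonzero homogeneous elements. -/
def IsGradedSubfield (𝒜 : GradedStr G A) (S : Subring A) : Prop :=
  𝒜.IsGradedSubring S ∧ ∀ x ∈ S, 𝒜.IsHomog x → x ≠ 0 → Ring.inverse x ∈ S

/-- The additive subgroup of homogeneous polynomials of grading `h` in `K[g₀⁻¹ T]`,
the polynomial ring in which `T` is declared homogeneous of grading `g₀`: the
coefficient of `T^n` must be homogeneous of grading `h * g₀⁻ⁿ`. -/
def polyDeg (𝒜 : GradedStr G A) (g₀ h : G) : AddSubgroup (Polynomial A) where
  carrier := {p | ∀ n : ℕ, p.coeff n ∈ 𝒜.deg (h * (g₀ ^ n)⁻¹)}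
  zero_mem' := by intro n; simpa using (𝒜.deg (h * (g₀ ^ n)⁻¹)).zero_mem
  add_mem' := by
    intro p q hp hq n
    rw [Polynomial.coeff_add]
    exact (𝒜.deg _).add_mem (hp n) (hq n)
  neg_mem' := by
    intro p hp n
    rw [Polynomial.coeff_neg]
    exact (𝒜.deg _).neg_mem (hp n)

/-- A homogeneous polynomial in `K[g₀⁻¹T]`. -/
def IsHomogPoly (𝒜 : GradedStr G A) (g₀ : G) (p : Polynomial A) : Prop :=
  ∃ h, p ∈ 𝒜.polyDeg g₀ h

/-- The graded fraction field of a graded subring of a graded field, computed inside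
the ambient graded field: the subring generated by `S` together with the inverses of
the nonzero homogeneous elements of `S`. -/
def fracIn (𝒜 : GradedStr G A) (S : Subring A) : Subring A :=
  Subring.closure (↑S ∪ {y : A | ∃ x ∈ S, x ≠ 0 ∧ 𝒜.IsHomog x ∧ y = Ring.inverse x})

end GradedStr

/-- `x` is integral over the subring `S` (satisfies a monic polynomial equation with
coefficients in `S`). -/
def IntegralOver {A : Type v} [CommRing A] (S : Subring A) (x : A) : Prop :=
  ∃ p : Polynomial A, p.Monic ∧ (∀ n, p.coeff n ∈ S) ∧ Polynomial.eval x p = 0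

/-- Algebraic independence of a family of elements over a subring: the evaluation map
from the (multivariate) polynomial ring is injective.  (For homogeneous elements this
is graded algebraic independence, the grading playing no role in injectivity.) -/
def AlgIndepOver {A : Type v} [CommRing A] {ι : Type*} (S : Subring A) (T : ι → A) : Prop :=
  Function.Injective (MvPolynomial.eval₂Hom S.subtype T)

/-- A graded valuation ring of the graded subfield `F` of the ambient graded field:
a graded subring `O ⊆ F` such that every nonzero homogeneous element `f` of `F`
satisfies `f ∈ O` or `f⁻¹ ∈ O`. -/
def IsGVRofSubfield {G : Type u} [CommGroup G] {A : Type v} [CommRing A]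
    (𝒜 : GradedStr G A) (F : Subring A) (O : Subring A) : Prop :=
  O ≤ F ∧ 𝒜.IsGradedSubring O ∧
    ∀ f ∈ F, f ≠ 0 → 𝒜.IsHomog f → f ∈ O ∨ Ring.inverse f ∈ O


/-- A Frobenius splitting of a field. -/
theorem field_frobenius_split (k : Type*) [Field k] (p : ℕ) [ExpChar k p] :
    ∃ ψ : k →+ k, ψ 1 = 1 ∧ ∀ a f, ψ (a ^ p * f) = a * ψ f := by
  let F := (frobenius k p).fieldRange
  obtain ⟨g, hg⟩ := LinearMap.exists_leftInverse_of_injective (Algebra.linearMap F k)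
    (LinearMap.ker_eq_bot.mpr (algebraMap F k).injective)
  let e : k ≃+* F := RingEquiv.ofBijective (frobenius k p).rangeRestrictField
    ⟨RingHom.injective _, (frobenius k p).rangeRestrictField_bijective.2⟩
  refine ⟨e.symm.toAddMonoidHom.comp g.toAddMonoidHom, ?_, ?_⟩
  · have : g 1 = 1 := by simpa using LinearMap.congr_fun hg 1
    simp [this]
  · intro a f
    have h1 : a ^ p * f = (e a) • f := by
      rw [Algebra.smul_def]; rfl
    have h2 : g (a ^ p * f) = e a * g f := by rw [h1, map_smul, smul_eq_mul]
    simp [h2]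

/-- A Frobenius splitting of a polynomial ring over a field. -/
theorem mvPolynomial_frobenius_split (k : Type*) [Field k] (p : ℕ) [ExpChar k p] (σ : Type*) :
    ∃ ψ : MvPolynomial σ k →+ MvPolynomial σ k,
      ψ 1 = 1 ∧ ∀ a f, ψ (a ^ p * f) = a * ψ f := by
  classical
  obtain ⟨ψ₀, h1, h2⟩ := field_frobenius_split k p
  have hp : p ≠ 0 := (expChar_pos k p).ne'
  have hinj : Function.Injective (fun t : σ →₀ ℕ => p • t) := by
    intro a b hab
    ext i
    have := DFunLike.congr_fun hab i
    simpa [hp] using this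
  let θ : (σ →₀ ℕ) → k →+ MvPolynomial σ k := fun m =>
    if h : ∃ t : σ →₀ ℕ, p • t = m then
      (MvPolynomial.monomial (R := k) h.choose).toAddMonoidHom.comp ψ₀ else 0
  have θ1 : ∀ t c, θ (p • t) c = MvPolynomial.monomial t (ψ₀ c) := by
    intro t c
    have h : ∃ t' : σ →₀ ℕ, p • t' = p • t := ⟨t, rfl⟩
    have h' : h.choose = t := hinj h.choose_spec
    simp only [θ, dif_pos h]
    simp [h']
  have θ2 : ∀ m c, (¬ ∃ t : σ →₀ ℕ, p • t = m) → θ m c = 0 := by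
    intro m c h
    simp only [θ, dif_neg h]; rfl
  let Ψ : MvPolynomial σ k →+ MvPolynomial σ k :=
    (Finsupp.liftAddHom θ).comp (AddMonoidAlgebra.coeffAddEquiv (R := k) (M := σ →₀ ℕ)).toAddMonoidHom
  have hΨ : ∀ m c, Ψ (MvPolynomial.monomial m c) = θ m c := by
    intro m c
    change Finsupp.liftAddHom θ (Finsupp.single m c) = _
    simp
  refine ⟨Ψ, ?_, ?_⟩
  · have := hΨ 0 1
    have h0 := θ1 0 1
    rw [smul_zero] at h0
    rw [h0, h1] at this
    exact this
  · have : ExpChar (MvPolynomial σ k) p :=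
      expChar_of_injective_ringHom (MvPolynomial.C_injective σ k) p
    intro a f
    induction a using MvPolynomial.induction_on' with
    | add a b ha hb => rw [add_pow_expChar, add_mul, map_add, ha, hb, add_mul]
    | monomial s c =>
      induction f using MvPolynomial.induction_on' with
      | add f g hf hg => rw [mul_add, map_add, hf, hg, map_add, mul_add]
      | monomial t d =>
        rw [MvPolynomial.monomial_pow, MvPolynomial.monomial_mul, hΨ, hΨ]
        by_cases h : ∃ t' : σ →₀ ℕ, p • t' = t
        · obtain ⟨t', rfl⟩ := h
          rw [← smul_add, θ1, θ1, MvPolynomial.monomial_mul, h2]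
        · rw [θ2 t d h, θ2, mul_zero]
          rintro ⟨r, hr⟩
          apply h
          refine ⟨r - s, ?_⟩
          ext i
          have := DFunLike.congr_fun hr i
          simp only [Finsupp.smul_apply, Finsupp.add_apply, smul_eq_mul, Finsupp.coe_tsub,
            Pi.sub_apply] at this ⊢
          rw [Nat.mul_sub]; omega

theorem mvPolynomial_frobenius_split_iter (k : Type*) [Field k] (p : ℕ) [ExpChar k p] (σ : Type*)
    (e : ℕ) :
    ∃ ψ : MvPolynomial σ k →+ MvPolynomial σ k,
      ψ 1 = 1 ∧ ∀ a f, ψ (a ^ p ^ e * f) = a * ψ f := by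
  obtain ⟨ψ, h1, h2⟩ := mvPolynomial_frobenius_split k p σ
  induction e with
  | zero => exact ⟨AddMonoidHom.id _, by simp, by simp⟩
  | succ e ih =>
    obtain ⟨φ, h3, h4⟩ := ih
    refine ⟨φ.comp ψ, by simp [h1, h3], ?_⟩
    intro a f
    simp only [AddMonoidHom.comp_apply]
    rw [pow_succ, pow_mul, h2, h4]

/-- A nonzero linear form on the integral closure forces finiteness. -/
theorem integralClosure_finite_of_form (P K₀ L : Type*) [CommRing P] [IsDomain P]
    [IsNoetherianRing P] [Field K₀] [Algebra P K₀] [IsFractionRing P K₀] [Field L]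
    [Algebra K₀ L] [Algebra P L] [IsScalarTower P K₀ L] [FiniteDimensional K₀ L]
    (l : integralClosure P L →ₗ[P] P) (hl : l ≠ 0) : Module.Finite P (integralClosure P L) := by
  classical
  obtain ⟨s, w, hw⟩ := FiniteDimensional.exists_is_basis_integral P K₀ L
  let W : s → integralClosure P L := fun i => ⟨w i, hw i⟩
  let Φ : integralClosure P L →ₗ[P] (s → P) :=
    LinearMap.pi fun i => l.comp (LinearMap.mulLeft P (W i))
  have hinj : Function.Injective (algebraMap P L) := by
    rw [IsScalarTower.algebraMap_eq P K₀ L]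
    exact (algebraMap K₀ L).injective.comp (IsFractionRing.injective P K₀)
  have hΦ : Function.Injective Φ := by
    rw [injective_iff_map_eq_zero]
    intro b hb
    by_contra hb0
    have hb' : ∀ i, l (W i * b) = 0 := fun i => congrFun hb i
    have key : ∀ x : integralClosure P L, l (x * b) = 0 := by
      intro x
      obtain ⟨⟨d, hd⟩, hd'⟩ := IsLocalization.exist_integer_multiples_of_finset
        (nonZeroDivisors P) (Finset.univ.image fun i => w.repr (x : L) i)
      have : ∀ i, ∃ c : P, algebraMap P K₀ c = d • w.repr (x : L) i := by
        intro i
        exact hd' _ (Finset.mem_image_of_mem _ (Finset.mem_univ i))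
      choose c hc using this
      have hx : d • x = ∑ i, c i • W i := by
        apply Subtype.ext
        have h3 : ((d • x : integralClosure P L) : L) = d • (x : L) := rfl
        have h4 : ((∑ i, c i • W i : integralClosure P L) : L) = ∑ i, c i • w i := by
          rw [← Subalgebra.coe_val, map_sum]; rfl
        rw [h3, h4]
        conv_lhs => rw [← w.sum_repr (x : L)]
        rw [Finset.smul_sum]
        refine Finset.sum_congr rfl fun i _ => ?_
        rw [← smul_assoc, ← hc, algebraMap_smul]
      have : d • l (x * b) = 0 := by
        rw [← map_smul, ← smul_mul_assoc, hx, Finset.sum_mul, map_sum]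
        refine Finset.sum_eq_zero fun i _ => ?_
        rw [smul_mul_assoc, map_smul, hb', smul_zero]
      rw [smul_eq_mul] at this
      exact (mul_eq_zero.mp this).resolve_left (nonZeroDivisors.ne_zero hd)
    have hbL : (b : L) ≠ 0 := fun h => hb0 (Subtype.ext h)
    have := IsLocalization.isAlgebraic K₀ (nonZeroDivisors P)
    have := Algebra.IsAlgebraic.trans P K₀ L
    obtain ⟨y, hy, hint⟩ := (Algebra.IsAlgebraic.isAlgebraic (R := P) ((b : L)⁻¹)).exists_integral_multiple
    apply hl
    ext c
    have h5 : (⟨y • (b : L)⁻¹, hint⟩ * c) * b = y • c := by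
      apply Subtype.ext
      change y • (b : L)⁻¹ * (c : L) * (b : L) = y • (c : L)
      rw [smul_mul_assoc, smul_mul_assoc]
      congr 1
      field_simp
    have h6 := key (⟨y • (b : L)⁻¹, hint⟩ * c)
    rw [h5, map_smul, smul_eq_mul] at h6
    exact (mul_eq_zero.mp h6).resolve_left hy
  exact Module.Finite.of_injective Φ hΦ

/-- The integral closure of a polynomial ring in a finite extension of its fraction field. -/
theorem mvPolynomial_integralClosure_finite (k : Type*) [Field k] (n : ℕ) (K₀ L : Type*)
    [Field K₀] [Algebra (MvPolynomial (Fin n) k) K₀] [IsFractionRing (MvPolynomial (Fin n) k) K₀]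
    [Field L] [Algebra K₀ L] [Algebra (MvPolynomial (Fin n) k) L]
    [IsScalarTower (MvPolynomial (Fin n) k) K₀ L] [FiniteDimensional K₀ L] :
    Module.Finite (MvPolynomial (Fin n) k) (integralClosure (MvPolynomial (Fin n) k) L) := by
  let P := MvPolynomial (Fin n) k
  let p := ringExpChar k
  have : ExpChar k p := inferInstance
  have : ExpChar P p := expChar_of_injective_ringHom (MvPolynomial.C_injective (Fin n) k) p
  have : ExpChar K₀ p := expChar_of_injective_ringHom (IsFractionRing.injective P K₀) p
  let E := separableClosure K₀ L
  have : ExpChar E p := expChar_of_injective_ringHom (algebraMap K₀ E).injective p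
  have : IsScalarTower P E L := IsScalarTower.of_algebraMap_eq fun _ => rfl
  have htrmul : ∀ (r : P) (x : E), Algebra.trace K₀ E (algebraMap P E r * x) =
      algebraMap P K₀ r * Algebra.trace K₀ E x := by
    intro r x
    rw [IsScalarTower.algebraMap_apply P K₀ E, ← Algebra.smul_def, map_smul, smul_eq_mul]
  let e := IsPurelyInseparable.exponent E L
  obtain ⟨ψ, hψ1, hψ2⟩ := mvPolynomial_frobenius_split_iter k p (Fin n) e
  let fr : L →+* E := IsPurelyInseparable.iterateFrobenius E L p (le_refl e)
  have hfr : ∀ a, algebraMap E L (fr a) = a ^ p ^ e :=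
    IsPurelyInseparable.algebraMap_iterateFrobenius E p (le_refl e)
  have hfrP : ∀ a : P, fr (algebraMap P L a) = algebraMap P E (a ^ p ^ e) := by
    intro a
    apply (algebraMap E L).injective
    rw [hfr, ← IsScalarTower.algebraMap_apply, map_pow]
  have hfrint : ∀ a, IsIntegral P a → IsIntegral P (fr a) := by
    intro a ha
    rw [← isIntegral_algebraMap_iff (algebraMap E L).injective, hfr]
    exact ha.pow _
  -- trace with values in `P`
  have htr : ∀ x : E, IsIntegral P x → ∃ y : P, algebraMap P K₀ y = Algebra.trace K₀ E x := by
    intro x hx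
    exact IsIntegrallyClosed.isIntegral_iff.mp (Algebra.isIntegral_trace (L := K₀) hx)
  have hPinj : Function.Injective (algebraMap P K₀) := IsFractionRing.injective P K₀
  obtain ⟨c₀, hc₀, t, ht0, ht⟩ : ∃ c₀ : E, IsIntegral P c₀ ∧ ∃ t : P, t ≠ 0 ∧
      algebraMap P K₀ t = Algebra.trace K₀ E c₀ := by
    obtain ⟨c, hc⟩ := Algebra.trace_surjective K₀ E 1
    have := IsLocalization.isAlgebraic K₀ (nonZeroDivisors P)
    have := Algebra.IsAlgebraic.trans P K₀ E
    obtain ⟨y, hy, hint⟩ := (Algebra.IsAlgebraic.isAlgebraic (R := P) c).exists_integral_multiple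
    refine ⟨y • c, hint, y, hy, ?_⟩
    rw [← algebraMap_smul K₀ y c, map_smul, hc, smul_eq_mul, mul_one]
  let c : E := algebraMap P E (t ^ (p ^ e - 1)) * c₀
  have hc : IsIntegral P c := isIntegral_algebraMap.mul hc₀
  have hp : p ^ e - 1 + 1 = p ^ e := Nat.sub_add_cancel (Nat.pos_of_ne_zero
    (pow_ne_zero _ (expChar_pos k p).ne'))
  choose τ hτ using fun b : integralClosure P L => htr (fr b * c) ((hfrint b b.2).mul hc)
  have hτadd : ∀ a b, τ (a + b) = τ a + τ b := by
    intro a b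
    apply hPinj
    rw [map_add, hτ, hτ, hτ, ← map_add]
    congr 1
    rw [← add_mul, ← map_add]; rfl
  have hτsmul : ∀ (r : P) b, τ (r • b) = r ^ p ^ e * τ b := by
    intro r b
    apply hPinj
    rw [map_mul, hτ, hτ, ← htrmul, ← hfrP, ← mul_assoc (fr (algebraMap P L r)), ← map_mul, ← Algebra.smul_def]; rfl
  have hτ1 : τ 1 = t ^ p ^ e := by
    apply hPinj
    rw [hτ, ← hp, pow_succ, map_mul (algebraMap P K₀), ht, ← htrmul]
    have : fr ((1 : integralClosure P L) : L) = 1 := map_one fr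
    rw [this, one_mul]
  refine integralClosure_finite_of_form P K₀ L
    { toFun := fun b => ψ (τ b)
      map_add' := fun a b => by rw [hτadd, map_add]
      map_smul' := fun r b => by rw [hτsmul, hψ2]; rfl } ?_
  intro h0
  have h1 := LinearMap.congr_fun h0 1
  have h2 : ψ (τ 1) = 0 := h1
  rw [hτ1, ← mul_one (t ^ p ^ e), hψ2, hψ1, mul_one] at h2
  exact ht0 h2

/-- Finiteness of the integral closure of a finitely generated domain over a field. -/
theorem domain_integralClosure_finite_aux (k D E L : Type*) [CommRing k] (hk : IsField k)
    [CommRing D] [IsDomain D] [Algebra k D] [Algebra.FiniteType k D]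
    [CommRing E] [IsDomain E] [Algebra D E] [Field L] [Algebra E L] [IsFractionRing E L]
    [Algebra D L] [IsScalarTower D E L] (hinj : Function.Injective (algebraMap D E))
    (hfr : ∀ z : E, ∃ d : D, d ≠ 0 ∧ ∃ a : D, algebraMap D E a = d • z) :
    Module.Finite D (integralClosure D E) := by
  let : Field k := hk.toField
  have : IsNoetherianRing D := Algebra.FiniteType.isNoetherianRing k D
  have hEL : Function.Injective (algebraMap E L) := IsFractionRing.injective E L
  have hDL : Function.Injective (algebraMap D L) := by
    rw [IsScalarTower.algebraMap_eq D E L]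
    exact hEL.comp hinj
  have : FaithfulSMul D L := (faithfulSMul_iff_algebraMap_injective D L).mpr hDL
  have : IsFractionRing D L := by
    apply IsFractionRing.of_field
    intro z
    obtain ⟨x, y, hy, rfl⟩ := IsFractionRing.div_surjective (A := E) z
    obtain ⟨d, hd, a, ha⟩ := hfr x
    obtain ⟨d', hd', a', ha'⟩ := hfr y
    refine ⟨a * d', a' * d, ?_⟩
    have h1 : algebraMap D L a = algebraMap D L d * algebraMap E L x := by
      rw [IsScalarTower.algebraMap_apply D E L, ha, Algebra.smul_def, map_mul,
        ← IsScalarTower.algebraMap_apply D E L]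
    have h2 : algebraMap D L a' = algebraMap D L d' * algebraMap E L y := by
      rw [IsScalarTower.algebraMap_apply D E L, ha', Algebra.smul_def, map_mul,
        ← IsScalarTower.algebraMap_apply D E L]
    have e1 : algebraMap D L d ≠ 0 := (map_ne_zero_iff _ hDL).mpr hd
    have e2 : algebraMap D L d' ≠ 0 := (map_ne_zero_iff _ hDL).mpr hd'
    have e3 : algebraMap E L y ≠ 0 :=
      (map_ne_zero_iff _ hEL).mpr (nonZeroDivisors.ne_zero hy)
    rw [map_mul, map_mul, h1, h2]
    field_simp
  obtain ⟨n, g, hg, hgfin⟩ := exists_finite_inj_algHom_of_fg k D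
  let P := MvPolynomial (Fin n) k
  let : Algebra P D := g.toRingHom.toAlgebra
  have : Module.Finite P D := hgfin
  let : Algebra P L := ((algebraMap D L).comp g.toRingHom).toAlgebra
  have : IsScalarTower P D L := IsScalarTower.of_algebraMap_eq fun _ => rfl
  have hPL : Function.Injective (algebraMap P L) := hDL.comp hg
  have : FaithfulSMul P L := (faithfulSMul_iff_algebraMap_injective P L).mpr hPL
  let K₀ := FractionRing P
  let : Algebra K₀ L := FractionRing.liftAlgebra P L
  have : IsScalarTower P K₀ L := inferInstance
  have : Algebra.EssFiniteType D L := Algebra.EssFiniteType.of_isLocalization L (nonZeroDivisors D)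
  have : Algebra.EssFiniteType P L := Algebra.EssFiniteType.comp P D L
  have : Algebra.EssFiniteType K₀ L := Algebra.EssFiniteType.of_comp P K₀ L
  have : Algebra.IsAlgebraic D L := IsLocalization.isAlgebraic L (nonZeroDivisors D)
  have : Algebra.IsAlgebraic P L := by
    have : FaithfulSMul P D := (faithfulSMul_iff_algebraMap_injective P D).mpr hg
    exact Algebra.IsAlgebraic.trans P D L
  have : Algebra.IsAlgebraic K₀ L := (IsFractionRing.comap_isAlgebraic_iff (A := P) (K := K₀) (C := L)).mp ‹_›
  have : FiniteDimensional K₀ L := Algebra.finite_of_essFiniteType_of_isAlgebraic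
  have hfinP : Module.Finite P (integralClosure P L) :=
    mvPolynomial_integralClosure_finite k n K₀ L
  have hnoeth : IsNoetherian P (integralClosure P L) := isNoetherian_of_isNoetherianRing_of_finite P _
  -- embed the integral closure of `D` in `E` into that of `P` in `L`
  let : Algebra P E := ((algebraMap D E).comp g.toRingHom).toAlgebra
  have : IsScalarTower P D E := IsScalarTower.of_algebraMap_eq fun _ => rfl
  have : IsScalarTower P E L := IsScalarTower.of_algebraMap_eq fun x =>
    IsScalarTower.algebraMap_apply D E L (g x)
  have hint : ∀ x : integralClosure D E, IsIntegral P (algebraMap E L x) := fun x =>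
    (isIntegral_trans (R := P) (x : E) x.2).map (IsScalarTower.toAlgHom P E L)
  let Φ : integralClosure D E →ₗ[P] integralClosure P L :=
    { toFun := fun x => ⟨algebraMap E L x, hint x⟩
      map_add' := fun x y => Subtype.ext (map_add (algebraMap E L) _ _)
      map_smul' := fun r x => Subtype.ext ((IsScalarTower.toAlgHom P E L).toLinearMap.map_smul r (x : E)) }
  have hΦ : Function.Injective Φ := by
    intro x y hxy
    exact Subtype.ext (hEL (congrArg Subtype.val hxy))
  have : Module.Finite P (integralClosure D E) := Module.Finite.of_injective Φ hΦ
  exact Module.Finite.of_restrictScalars_finite P D (integralClosure D E)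

theorem domain_integralClosure_finite (k D E : Type*) [CommRing k] (hk : IsField k)
    [CommRing D] [IsDomain D] [Algebra k D] [Algebra.FiniteType k D]
    [CommRing E] [IsDomain E] [Algebra D E] (hinj : Function.Injective (algebraMap D E))
    (hfr : ∀ z : E, ∃ d : D, d ≠ 0 ∧ ∃ a : D, algebraMap D E a = d • z) :
    Module.Finite D (integralClosure D E) :=
  domain_integralClosure_finite_aux k D E (FractionRing E) hk hinj hfr

namespace GradedStr

section Basic

variable {G : Type u} [CommGroup G] {K : Type v} [CommRing K] (𝒜 : GradedStr G K)

theorem comp_zero' (g : G) : 𝒜.comp 0 g = 0 := by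
  have := 𝒜.comp_add 0 0 g
  simpa using this

/-- The component map as an additive homomorphism. -/
def compHom (g : G) : K →+ K where
  toFun x := 𝒜.comp x g
  map_zero' := 𝒜.comp_zero' g
  map_add' a b := 𝒜.comp_add a b g

theorem homog_induction {Pr : K → Prop} (x : K) (h0 : Pr 0)
    (ha : ∀ a b, Pr a → Pr b → Pr (a + b)) (hh : ∀ g, Pr (𝒜.comp x g)) : Pr x := by
  rw [← 𝒜.sum_comp x, finsum_eq_sum _ (𝒜.finite_support x)]
  exact Finset.sum_induction _ Pr ha h0 (fun g _ => hh g)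

theorem comp_mul_homog {y : K} {h : G} (hy : y ∈ 𝒜.deg h) (x : K) (g : G) :
    𝒜.comp (x * y) (g * h) = 𝒜.comp x g * y := by
  refine 𝒜.homog_induction (Pr := fun a => 𝒜.comp (a * y) (g * h) = 𝒜.comp a g * y) x ?_ ?_ ?_
  · simp [𝒜.comp_zero']
  · intro a b ha hb
    rw [add_mul, 𝒜.comp_add, ha, hb, 𝒜.comp_add, add_mul]
  · intro i
    have hm := 𝒜.mul_mem (𝒜.comp_mem x i) hy
    by_cases hi : i = g
    · subst hi
      rw [𝒜.comp_of_mem hm, 𝒜.comp_of_mem (𝒜.comp_mem x i)]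
    · rw [𝒜.comp_of_mem_ne hm (fun h' => hi (mul_right_cancel h').symm),
        𝒜.comp_of_mem_ne (𝒜.comp_mem x i) (fun h' => hi h'.symm), zero_mul]

theorem comp_mul_homog' {y : K} {h : G} (hy : y ∈ 𝒜.deg h) (x : K) (g : G) :
    𝒜.comp (x * y) g = 𝒜.comp x (g * h⁻¹) * y := by
  rw [← 𝒜.comp_mul_homog hy, inv_mul_cancel_right]

theorem pow_mem' {x : K} {g : G} (hx : x ∈ 𝒜.deg g) (n : ℕ) : x ^ n ∈ 𝒜.deg (g ^ n) := by
  induction n with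
  | zero => simpa using 𝒜.one_mem
  | succ n ih => rw [pow_succ, pow_succ]; exact 𝒜.mul_mem ih hx

theorem inverse_mem (hK : 𝒜.IsGradedField) {x : K} {g : G} (hx : x ∈ 𝒜.deg g) (h0 : x ≠ 0) :
    Ring.inverse x ∈ 𝒜.deg g⁻¹ := by
  have hu := hK.2 x ⟨g, hx⟩ h0
  have h1 := Ring.inverse_mul_cancel x hu
  have h2 := 𝒜.comp_mul_homog hx (Ring.inverse x) g⁻¹
  rw [h1, inv_mul_cancel, 𝒜.comp_of_mem 𝒜.one_mem] at h2
  have h3 : Ring.inverse x = 𝒜.comp (Ring.inverse x) g⁻¹ := by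
    apply hu.mul_right_cancel
    rw [h1, h2]
  rw [h3]
  exact 𝒜.comp_mem _ _

theorem deg_unique {x : K} {g h : G} (hg : x ∈ 𝒜.deg g) (hh : x ∈ 𝒜.deg h) (h0 : x ≠ 0) :
    g = h := by
  by_contra hne
  have := 𝒜.comp_of_mem_ne hh hne
  rw [𝒜.comp_of_mem hg] at this
  exact h0 this

end Basic

theorem integralOver_iff {K : Type v} [CommRing K] (S : Subring K) (x : K) :
    IntegralOver S x ↔ IsIntegral S x := by
  constructor
  · rintro ⟨p, hp, hc, he⟩
    have hl : p ∈ Polynomial.lifts S.subtype := by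
      rw [Polynomial.lifts_iff_coeff_lifts]
      intro n
      exact ⟨⟨_, hc n⟩, rfl⟩
    obtain ⟨q, hq, -, hqm⟩ := Polynomial.lifts_and_natDegree_eq_and_monic hl hp
    refine ⟨q, hqm, ?_⟩
    change Polynomial.eval₂ S.subtype x q = 0
    rw [← Polynomial.eval_map, hq, he]
  · rintro ⟨q, hqm, he⟩
    refine ⟨q.map S.subtype, hqm.map _, ?_, ?_⟩
    · intro n
      rw [Polynomial.coeff_map]
      exact (q.coeff n).2
    · rw [Polynomial.eval_map]; exact he

section Lift

variable {G : Type u} [CommGroup G] {K : Type v} [CommRing K] (𝒜 : GradedStr G K)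
  {F : Type*} [CommGroup F] (φ : F →* G)

/-- The degreewise pullback of a subring along `φ`. -/
def lift (S : Subring K) : Subring (MonoidAlgebra K F) where
  carrier := {f | ∀ m, f.coeff m ∈ S ∧ f.coeff m ∈ 𝒜.deg (φ m)}
  zero_mem' := fun m => ⟨S.zero_mem, (𝒜.deg _).zero_mem⟩
  add_mem' := fun {f g} hf hg m => by
    rw [MonoidAlgebra.coeff_add]
    exact ⟨S.add_mem (hf m).1 (hg m).1, (𝒜.deg _).add_mem (hf m).2 (hg m).2⟩
  neg_mem' := fun {f} hf m => by
    rw [MonoidAlgebra.coeff_neg]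
    exact ⟨S.neg_mem (hf m).1, (𝒜.deg _).neg_mem (hf m).2⟩
  one_mem' := fun m => by
    classical
    rw [MonoidAlgebra.one_def, MonoidAlgebra.coeff_single, Finsupp.single_apply]
    split_ifs with h
    · subst h
      rw [map_one]
      exact ⟨S.one_mem, 𝒜.one_mem⟩
    · exact ⟨S.zero_mem, (𝒜.deg _).zero_mem⟩
  mul_mem' := fun {f g} hf hg m => by
    classical
    rw [MonoidAlgebra.coeff_mul]
    constructor
    · refine S.sum_mem fun a _ => S.sum_mem fun b _ => ?_
      dsimp only
      split_ifs
      · exact S.mul_mem (hf a).1 (hg b).1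
      · exact S.zero_mem
    · refine (𝒜.deg _).sum_mem fun a _ => (𝒜.deg _).sum_mem fun b _ => ?_
      dsimp only
      split_ifs with h
      · rw [← h, map_mul]
        exact 𝒜.mul_mem (hf a).2 (hg b).2
      · exact (𝒜.deg _).zero_mem

theorem mem_lift {S : Subring K} {f : MonoidAlgebra K F} :
    f ∈ 𝒜.lift φ S ↔ ∀ m, f.coeff m ∈ S ∧ f.coeff m ∈ 𝒜.deg (φ m) := Iff.rfl

theorem single_mem_lift {S : Subring K} {m : F} {a : K} (ha : a ∈ S) (hd : a ∈ 𝒜.deg (φ m)) :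
    MonoidAlgebra.single m a ∈ 𝒜.lift φ S := by
  classical
  intro n
  rw [MonoidAlgebra.coeff_single, Finsupp.single_apply]
  split_ifs with h
  · subst h; exact ⟨ha, hd⟩
  · exact ⟨S.zero_mem, (𝒜.deg _).zero_mem⟩

theorem lift_mono {S T : Subring K} (h : S ≤ T) : 𝒜.lift φ S ≤ 𝒜.lift φ T :=
  fun _ hf m => ⟨h (hf m).1, (hf m).2⟩

theorem isDomain_lift (hK : 𝒜.IsGradedField) [UniqueProds F] (S : Subring K) :
    IsDomain (𝒜.lift φ S) := by
  have := hK.1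
  have : NoZeroDivisors (𝒜.lift φ S) := by
    constructor
    rintro ⟨f, hf⟩ ⟨g, hg⟩ hfg
    have hfg' : f * g = 0 := congrArg Subtype.val hfg
    by_contra! hne
    have hf0 : f.coeff.support.Nonempty := by
      rw [Finsupp.support_nonempty_iff]
      intro h
      exact hne.1 (Subtype.ext (MonoidAlgebra.ext h))
    have hg0 : g.coeff.support.Nonempty := by
      rw [Finsupp.support_nonempty_iff]
      intro h
      exact hne.2 (Subtype.ext (MonoidAlgebra.ext h))
    obtain ⟨a, ha, b, hb, h⟩ := UniqueProds.uniqueMul_of_nonempty hf0 hg0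
    have h1 := MonoidAlgebra.coeff_mul_mul_of_uniqueMul h
    rw [hfg'] at h1
    have hu := hK.2 (f.coeff a) ⟨_, (hf a).2⟩ (Finsupp.mem_support_iff.mp ha)
    have h2 : f.coeff a * g.coeff b = 0 := h1.symm
    exact (Finsupp.mem_support_iff.mp hb) ((hu.mul_right_eq_zero).mp h2)
  exact NoZeroDivisors.to_isDomain _

/-- The augmentation. -/
noncomputable def aug : MonoidAlgebra K F →+* K :=
  (MonoidAlgebra.lift K K F 1 : MonoidAlgebra K F →ₐ[K] K).toRingHom

theorem aug_single (m : F) (a : K) : aug (MonoidAlgebra.single m a : MonoidAlgebra K F) = a := by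
  simp [aug]

theorem aug_mem {S : Subring K} {f : MonoidAlgebra K F} (hf : f ∈ 𝒜.lift φ S) :
    aug f ∈ S := by
  have : aug f = f.coeff.sum fun _ b => b := by
    simp [aug, MonoidAlgebra.lift_apply]
  rw [this]
  exact S.sum_mem fun m _ => (hf m).1

end Lift

end GradedStr

namespace GradedStr

section Gen

variable {G : Type u} [CommGroup G] {K : Type v} [CommRing K] (𝒜 : GradedStr G K)
  {F : Type*} [CommGroup F] (φ : F →* G)

theorem closure_induction' {k : Subring K} {s : Set K} {Pr : K → Prop} (h0 : Pr 0)
    (hadd : ∀ a b, Pr a → Pr b → Pr (a + b))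
    (hm : ∀ c ∈ k, ∀ μ ∈ Submonoid.closure s, Pr (c * μ)) :
    ∀ a ∈ Subring.closure ((k : Set K) ∪ s), Pr a := by
  intro a ha
  have h1 : Subring.closure ((k : Set K) ∪ s) ≤ (Algebra.adjoin k s).toSubring := by
    rw [Subring.closure_le]
    rintro x (hx | hx)
    · exact (Algebra.adjoin k s).algebraMap_mem ⟨x, hx⟩
    · exact Algebra.subset_adjoin hx
  have h2 : a ∈ Subalgebra.toSubmodule (Algebra.adjoin k s) := h1 ha
  rw [Algebra.adjoin_eq_span] at h2
  clear ha h1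
  have h3 : ∀ c ∈ k, Pr (c * a) := by
    induction h2 using Submodule.span_induction with
    | mem x hx => exact fun c hc => hm c hc x hx
    | zero => intro c _; rwa [mul_zero]
    | add x y _ _ hx hy =>
      intro c hc
      rw [mul_add]
      exact hadd _ _ (hx c hc) (hy c hc)
    | smul r x _ hx =>
      intro c hc
      have := hx (c * (r : K)) (k.mul_mem hc r.2)
      rwa [mul_assoc] at this
  simpa using h3 1 k.one_mem

theorem monomial_mem {s : Set K} {e : K → F} (he : ∀ a ∈ s, a ∈ 𝒜.deg (φ (e a)))
    (S : Subring (MonoidAlgebra K F)) (hS : ∀ a ∈ s, MonoidAlgebra.single (e a) a ∈ S) :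
    ∀ μ ∈ Submonoid.closure s, ∃ r : F, μ ∈ 𝒜.deg (φ r) ∧ MonoidAlgebra.single r μ ∈ S := by
  intro μ hμ
  induction hμ using Submonoid.closure_induction with
  | mem x hx => exact ⟨e x, he x hx, hS x hx⟩
  | one =>
    refine ⟨1, ?_, ?_⟩
    · rw [map_one]; exact 𝒜.one_mem
    · exact S.one_mem
  | mul x y _ _ hx hy =>
    obtain ⟨r, hr, hr'⟩ := hx
    obtain ⟨t, ht, ht'⟩ := hy
    refine ⟨r * t, ?_, ?_⟩
    · rw [map_mul]; exact 𝒜.mul_mem hr ht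
    · rw [← MonoidAlgebra.single_mul_single]; exact S.mul_mem hr' ht'

theorem degree_lemma {k : Subring K} (hk : 𝒜.IsGradedSubring k) {s : Set K} {e : K → F}
    (he : ∀ a ∈ s, a ∈ 𝒜.deg (φ (e a))) :
    ∀ a ∈ Subring.closure ((k : Set K) ∪ s), ∀ g, 𝒜.comp a g ≠ 0 →
      ∃ c ∈ k, c ≠ 0 ∧ ∃ m : F, c ∈ 𝒜.deg (g * (φ m)⁻¹) := by
  refine closure_induction' ?_ ?_ ?_
  · intro g h; exact absurd (𝒜.comp_zero' g) h
  · intro a b ha hb g h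
    rw [𝒜.comp_add] at h
    by_cases h1 : 𝒜.comp a g = 0
    · rw [h1, zero_add] at h
      exact hb g h
    · exact ha g h1
  · intro c hc μ hμ g h
    obtain ⟨r, hr, -⟩ := 𝒜.monomial_mem φ he ⊤ (fun _ _ => trivial) μ hμ
    rw [𝒜.comp_mul_homog' hr] at h
    exact ⟨_, hk c hc _, fun h0 => h (by rw [h0, zero_mul]), r, 𝒜.comp_mem _ _⟩

theorem lift_closure_le {k : Subring K} (hk : 𝒜.IsGradedSubring k) {s : Set K} {e : K → F}
    (he : ∀ a ∈ s, a ∈ 𝒜.deg (φ (e a)))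
    (S : Subring (MonoidAlgebra K F)) (hS : ∀ a ∈ s, MonoidAlgebra.single (e a) a ∈ S)
    (hS' : ∀ m, ∀ c ∈ k, c ∈ 𝒜.deg (φ m) → MonoidAlgebra.single m c ∈ S) :
    𝒜.lift φ (Subring.closure ((k : Set K) ∪ s)) ≤ S := by
  have key : ∀ a ∈ Subring.closure ((k : Set K) ∪ s),
      ∀ m : F, MonoidAlgebra.single m (𝒜.comp a (φ m)) ∈ S := by
    refine closure_induction' ?_ ?_ ?_
    · intro m
      rw [𝒜.comp_zero', MonoidAlgebra.single_zero]
      exact S.zero_mem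
    · intro a b ha hb m
      rw [𝒜.comp_add, MonoidAlgebra.single_add]
      exact S.add_mem (ha m) (hb m)
    · intro c hc μ hμ m
      obtain ⟨r, hr, hr'⟩ := 𝒜.monomial_mem φ he S hS μ hμ
      rw [𝒜.comp_mul_homog' hr]
      have h1 : (MonoidAlgebra.single m (𝒜.comp c (φ m * (φ r)⁻¹) * μ) : MonoidAlgebra K F)
          = MonoidAlgebra.single (m * r⁻¹) (𝒜.comp c (φ m * (φ r)⁻¹))
            * MonoidAlgebra.single r μ := by
        rw [MonoidAlgebra.single_mul_single, inv_mul_cancel_right]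
      rw [h1]
      refine S.mul_mem (hS' _ _ (hk c hc _) ?_) hr'
      rw [map_mul, map_inv]
      exact 𝒜.comp_mem _ _
  intro f hf
  rw [← MonoidAlgebra.sum_coeff_single f]
  refine S.sum_mem fun m _ => ?_
  have := key _ (hf m).1 m
  rwa [𝒜.comp_of_mem (hf m).2] at this

/-- The degree one part of a graded subfield. -/
def base (k : Subring K) : Subring K where
  carrier := {x | x ∈ k ∧ x ∈ 𝒜.deg 1}
  zero_mem' := ⟨k.zero_mem, (𝒜.deg 1).zero_mem⟩
  one_mem' := ⟨k.one_mem, 𝒜.one_mem⟩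
  add_mem' := fun hx hy => ⟨k.add_mem hx.1 hy.1, (𝒜.deg 1).add_mem hx.2 hy.2⟩
  neg_mem' := fun hx => ⟨k.neg_mem hx.1, (𝒜.deg 1).neg_mem hx.2⟩
  mul_mem' := fun {x y} hx hy => ⟨k.mul_mem hx.1 hy.1, by
    have := 𝒜.mul_mem hx.2 hy.2
    rwa [one_mul] at this⟩

theorem base_isField (hK : 𝒜.IsGradedField) {k : Subring K} (hk : 𝒜.IsGradedSubfield k) :
    IsField (𝒜.base k) := by
  have := hK.1
  refine ⟨⟨0, 1, zero_ne_one⟩, mul_comm, ?_⟩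
  rintro ⟨a, ha⟩ h0
  have hane : a ≠ 0 := fun h => h0 (Subtype.ext h)
  have hi := 𝒜.inverse_mem hK ha.2 hane
  rw [inv_one] at hi
  exact ⟨⟨Ring.inverse a, hk.2 a ha.1 ⟨1, ha.2⟩ hane, hi⟩,
    Subtype.ext (Ring.mul_inverse_cancel a (hK.2 a ⟨1, ha.2⟩ hane))⟩

/-- The structure map from the base field. -/
noncomputable def baseHom {k A : Subring K} (h : k ≤ A) : 𝒜.base k →+* 𝒜.lift φ A :=
  ((MonoidAlgebra.singleOneRingHom (R := K) (M := F)).comp (𝒜.base k).subtype).codRestrict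
    (𝒜.lift φ A) (fun x => 𝒜.single_mem_lift φ (h x.2.1) (by rw [map_one]; exact x.2.2))

theorem single_mem_of_base (hK : 𝒜.IsGradedField) {k : Subring K} (hk : 𝒜.IsGradedSubfield k)
    (S : Subring (MonoidAlgebra K F))
    (h1 : ∀ c ∈ 𝒜.base k, MonoidAlgebra.single 1 c ∈ S) (t : Set F)
    (ht : ∀ m : F, (∃ c ∈ k, c ≠ 0 ∧ c ∈ 𝒜.deg (φ m)) → m ∈ Submonoid.closure t)
    (h2 : ∀ m ∈ t, ∃ c ∈ k, c ≠ 0 ∧ c ∈ 𝒜.deg (φ m) ∧ MonoidAlgebra.single m c ∈ S) :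
    ∀ m, ∀ c ∈ k, c ∈ 𝒜.deg (φ m) → MonoidAlgebra.single m c ∈ S := by
  have := hK.1
  intro m c hc hcm
  by_cases h0 : c = 0
  · rw [h0, MonoidAlgebra.single_zero]; exact S.zero_mem
  have hm := ht m ⟨c, hc, h0, hcm⟩
  have key : ∃ c ∈ k, c ≠ 0 ∧ c ∈ 𝒜.deg (φ m) ∧ MonoidAlgebra.single m c ∈ S := by
    clear hc hcm h0
    induction hm using Submonoid.closure_induction with
    | mem x hx => exact h2 x hx
    | one => exact ⟨1, k.one_mem, one_ne_zero, by rw [map_one]; exact 𝒜.one_mem, S.one_mem⟩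
    | mul x y _ _ hx hy =>
      obtain ⟨a, ha, ha0, had, haS⟩ := hx
      obtain ⟨b, hb, hb0, hbd, hbS⟩ := hy
      refine ⟨a * b, k.mul_mem ha hb, ?_, ?_, ?_⟩
      · exact fun h => hb0 (((hK.2 a ⟨_, had⟩ ha0).mul_right_eq_zero).mp h)
      · rw [map_mul]; exact 𝒜.mul_mem had hbd
      · rw [← MonoidAlgebra.single_mul_single]; exact S.mul_mem haS hbS
  obtain ⟨u, hu, hu0, hud, huS⟩ := key
  have hi := 𝒜.inverse_mem hK hud hu0
  have h3 : (MonoidAlgebra.single m c : MonoidAlgebra K F)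
      = MonoidAlgebra.single 1 (c * Ring.inverse u) * MonoidAlgebra.single m u := by
    rw [MonoidAlgebra.single_mul_single, one_mul, mul_assoc,
      Ring.inverse_mul_cancel u (hK.2 u ⟨_, hud⟩ hu0), mul_one]
  rw [h3]
  refine S.mul_mem (h1 _ ⟨k.mul_mem hc (hk.2 u hu ⟨_, hud⟩ hu0), ?_⟩) huS
  have := 𝒜.mul_mem hcm hi
  rwa [mul_inv_cancel] at this

theorem lift_finiteType (hK : 𝒜.IsGradedField) {k : Subring K} (hk : 𝒜.IsGradedSubfield k)
    {A : Subring K} (hkA : k ≤ A) {s : Set K} (hsf : s.Finite)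
    (hA : A = Subring.closure ((k : Set K) ∪ s)) {e : K → F}
    (he : ∀ a ∈ s, a ∈ 𝒜.deg (φ (e a)))
    (hF : ∀ M : Subgroup F, M.FG) :
    (𝒜.baseHom φ hkA).FiniteType := by
  have := hK.1
  let M : Subgroup F :=
    { carrier := {m | ∃ c ∈ k, c ≠ 0 ∧ c ∈ 𝒜.deg (φ m)}
      one_mem' := ⟨1, k.one_mem, one_ne_zero, by rw [map_one]; exact 𝒜.one_mem⟩
      mul_mem' := by
        rintro x y ⟨a, ha, ha0, had⟩ ⟨b, hb, hb0, hbd⟩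
        refine ⟨a * b, k.mul_mem ha hb, ?_, ?_⟩
        · exact fun h => hb0 (((hK.2 a ⟨_, had⟩ ha0).mul_right_eq_zero).mp h)
        · rw [map_mul]; exact 𝒜.mul_mem had hbd
      inv_mem' := by
        rintro x ⟨a, ha, ha0, had⟩
        have hu := hK.2 a ⟨_, had⟩ ha0
        refine ⟨Ring.inverse a, hk.2 a ha ⟨_, had⟩ ha0, ?_, ?_⟩
        · intro h
          have h1 := Ring.mul_inverse_cancel a hu
          rw [h, mul_zero] at h1
          exact zero_ne_one h1
        · rw [map_inv]; exact 𝒜.inverse_mem hK had ha0 }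
  obtain ⟨t, ht⟩ := (Subgroup.fg_iff_submonoid_fg M).mp (hF M)
  have htM : ∀ m ∈ t, ∃ c ∈ k, c ≠ 0 ∧ c ∈ 𝒜.deg (φ m) := fun m hm => by
    have : m ∈ M.toSubmonoid := ht ▸ Submonoid.subset_closure hm
    exact this
  choose! u hu hu0 hud using htM
  let T : Set (MonoidAlgebra K F) :=
    (fun m => MonoidAlgebra.single m (u m)) '' (t : Set F) ∪ (fun a => MonoidAlgebra.single (e a) a) '' s
  have hTf : T.Finite := (t.finite_toSet.image _).union (hsf.image _)
  let _ := (𝒜.baseHom φ hkA).toAlgebra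
  let T' : Set (𝒜.lift φ A) := Subtype.val ⁻¹' T
  have hTf' : T'.Finite := hTf.preimage Subtype.val_injective.injOn
  let B := Algebra.adjoin (𝒜.base k) T'
  let S : Subring (MonoidAlgebra K F) := B.toSubring.map (𝒜.lift φ A).subtype
  have hsA : ∀ a ∈ s, a ∈ A := fun a ha => by rw [hA]; exact Subring.subset_closure (Or.inr ha)
  have hle : 𝒜.lift φ A ≤ S := by
    conv_lhs => rw [hA]
    refine 𝒜.lift_closure_le φ hk.1 he S ?_ ?_
    · intro a ha
      exact ⟨⟨_, 𝒜.single_mem_lift φ (hsA a ha) (he a ha)⟩,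
        Algebra.subset_adjoin (Or.inr ⟨a, ha, rfl⟩), rfl⟩
    · refine 𝒜.single_mem_of_base φ hK hk S ?_ t ?_ ?_
      · intro c hc
        exact ⟨_, B.algebraMap_mem ⟨c, hc⟩, rfl⟩
      · intro m hm
        rw [ht]
        exact hm
      · intro m hm
        refine ⟨u m, hu m hm, hu0 m hm, hud m hm, ?_⟩
        exact ⟨⟨_, 𝒜.single_mem_lift φ (hkA (hu m hm)) (hud m hm)⟩,
          Algebra.subset_adjoin (Or.inl ⟨m, hm, rfl⟩), rfl⟩
  change Algebra.FiniteType _ _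
  refine ⟨(Subalgebra.fg_def).mpr ⟨T', hTf', ?_⟩⟩
  rw [eq_top_iff]
  intro x _
  obtain ⟨y, hy, hyx⟩ := hle x.2
  have : y = x := Subtype.ext hyx
  exact this ▸ hy

end Gen

end GradedStr

namespace GradedStr

section Main

variable {G : Type u} [CommGroup G] {K : Type v} [CommRing K] (𝒜 : GradedStr G K)
  {F : Type*} [CommGroup F] (φ : F →* G)

theorem frac_single (hK : 𝒜.IsGradedField) {k : Subring K} (hk : 𝒜.IsGradedSubfield k)
    {A : Subring K} (hkA : k ≤ A) {s : Set K}
    (hA : A = Subring.closure ((k : Set K) ∪ s)) {e : K → F}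
    (he : ∀ a ∈ s, a ∈ 𝒜.deg (φ (e a)))
    (hfrac : ∀ z : K, 𝒜.IsHomog z → ∃ a ∈ A, ∃ b ∈ A, 𝒜.IsHomog b ∧ b ≠ 0 ∧ z * b = a)
    (m : F) (z : K) (hz : z ∈ 𝒜.deg (φ m)) :
    ∃ d : 𝒜.lift φ A, d ≠ 0 ∧ d.1 * MonoidAlgebra.single m z ∈ 𝒜.lift φ A := by
  have := hK.1
  obtain ⟨a, ha, b, hb, ⟨g, hbg⟩, hb0, hab⟩ := hfrac z ⟨_, hz⟩
  obtain ⟨c, hc, hc0, r, hcr⟩ := 𝒜.degree_lemma φ hk.1 he b (hA ▸ hb) g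
    (by rwa [𝒜.comp_of_mem hbg])
  have hci := 𝒜.inverse_mem hK hcr hc0
  have hck : Ring.inverse c ∈ A := hkA (hk.2 c hc ⟨_, hcr⟩ hc0)
  have hbr : b * Ring.inverse c ∈ 𝒜.deg (φ r) := by
    have := 𝒜.mul_mem hbg hci
    rwa [mul_inv, inv_inv, mul_inv_cancel_left] at this
  have hne : b * Ring.inverse c ≠ 0 := by
    intro h
    have h1 := ((hK.2 b ⟨_, hbg⟩ hb0).mul_right_eq_zero).mp h
    have h2 := Ring.mul_inverse_cancel c (hK.2 c ⟨_, hcr⟩ hc0)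
    rw [h1, mul_zero] at h2
    exact zero_ne_one h2
  refine ⟨⟨MonoidAlgebra.single r (b * Ring.inverse c),
    𝒜.single_mem_lift φ (A.mul_mem hb hck) hbr⟩, ?_, ?_⟩
  · intro h
    have h1 : (MonoidAlgebra.single r (b * Ring.inverse c) : MonoidAlgebra K F) = 0 :=
      congrArg Subtype.val h
    exact hne (by simpa using h1)
  · rw [MonoidAlgebra.single_mul_single]
    refine 𝒜.single_mem_lift φ ?_ ?_
    · have : b * Ring.inverse c * z = a * Ring.inverse c := by rw [← hab]; ring
      rw [this]
      exact A.mul_mem ha hck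
    · rw [map_mul]
      exact 𝒜.mul_mem hbr hz

theorem frac_lift [UniqueProds F] (hK : 𝒜.IsGradedField) {A : Subring K}
    (hs : ∀ (m : F) (z : K), z ∈ 𝒜.deg (φ m) →
      ∃ d : 𝒜.lift φ A, d ≠ 0 ∧ d.1 * MonoidAlgebra.single m z ∈ 𝒜.lift φ A)
    (f : MonoidAlgebra K F) (hf : f ∈ 𝒜.lift φ ⊤) :
    ∃ d : 𝒜.lift φ A, d ≠ 0 ∧ d.1 * f ∈ 𝒜.lift φ A := by
  classical
  have := 𝒜.isDomain_lift φ hK A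
  have key : ∀ t : Finset F, ∃ d : 𝒜.lift φ A, d ≠ 0 ∧
      d.1 * ∑ m ∈ t, MonoidAlgebra.single m (f.coeff m) ∈ 𝒜.lift φ A := by
    intro t
    induction t using Finset.induction_on with
    | empty => exact ⟨1, one_ne_zero, by simp⟩
    | insert m t hm ih =>
      obtain ⟨d, hd, hd'⟩ := ih
      obtain ⟨c, hc, hc'⟩ := hs m _ (hf m).2
      refine ⟨d * c, mul_ne_zero hd hc, ?_⟩
      rw [Finset.sum_insert hm, mul_add]
      refine Subring.add_mem _ ?_ ?_
      · have := Subring.mul_mem _ d.2 hc'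
        rwa [← mul_assoc] at this
      · have := Subring.mul_mem _ c.2 hd'
        rwa [← mul_assoc, mul_comm c.1] at this
  have h := key f.coeff.support
  have h2 := MonoidAlgebra.sum_coeff_single f
  rw [Finsupp.sum] at h2
  rwa [h2] at h

theorem integral_lift {A : Subring K} (hAgr : 𝒜.IsGradedSubring A) {m : F} {b : K}
    (hb : b ∈ 𝒜.deg (φ m)) (hi : IntegralOver A b) :
    (Subring.inclusion (𝒜.lift_mono φ (le_top : A ≤ ⊤))).IsIntegralElem
      ⟨MonoidAlgebra.single m b, 𝒜.single_mem_lift φ (Subring.mem_top b) hb⟩ := by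
  obtain ⟨p, hp, hc, he⟩ := hi
  set N := p.natDegree with hN
  let co : ℕ → 𝒜.lift φ A := fun i =>
    ⟨MonoidAlgebra.single (m ^ (N - i)) (𝒜.comp (p.coeff i) (φ (m ^ (N - i)))),
      𝒜.single_mem_lift φ (hAgr _ (hc i) _) (𝒜.comp_mem _ _)⟩
  refine ⟨Polynomial.X ^ N + ∑ i ∈ Finset.range N, Polynomial.monomial i (co i), ?_, ?_⟩
  · refine Polynomial.monic_X_pow_add ?_
    refine lt_of_le_of_lt (Polynomial.degree_sum_le _ _) ?_
    refine (Finset.sup_lt_iff (WithBot.bot_lt_coe N)).mpr ?_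
    intro i hi
    exact lt_of_le_of_lt (Polynomial.degree_monomial_le _ _)
      (WithBot.coe_lt_coe.mpr (Finset.mem_range.mp hi))
  · apply Subtype.ext
    rw [Polynomial.eval₂_add, Polynomial.eval₂_finsetSum, Polynomial.eval₂_X_pow]
    simp only [Polynomial.eval₂_monomial]
    have e1 : b ^ N + ∑ i ∈ Finset.range N, 𝒜.comp (p.coeff i) (φ (m ^ (N - i))) * b ^ i = 0 := by
      have h1 : p.eval b = b ^ N + ∑ i ∈ Finset.range N, p.coeff i * b ^ i := by
        rw [Polynomial.eval_eq_sum_range, Finset.sum_range_succ, ← hN, hN, hp.coeff_natDegree,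
          one_mul, add_comm]
      rw [he] at h1
      have h2 := congrArg (𝒜.compHom (φ m ^ N)) h1
      rw [map_zero, map_add, map_sum] at h2
      have h3 : 𝒜.compHom (φ m ^ N) (b ^ N) = b ^ N := 𝒜.comp_of_mem (𝒜.pow_mem' hb N)
      rw [h3] at h2
      rw [h2]
      congr 1
      refine Finset.sum_congr rfl fun i hi => ?_
      have h4 := 𝒜.comp_mul_homog (𝒜.pow_mem' hb i) (p.coeff i) (φ (m ^ (N - i)))
      rw [← h4, map_pow, ← pow_add, Nat.sub_add_cancel (Finset.mem_range.mp hi).le]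
      rfl
    have e2 : (MonoidAlgebra.single m b : MonoidAlgebra K F) ^ N
        + ∑ i ∈ Finset.range N, MonoidAlgebra.single (m ^ (N - i))
          (𝒜.comp (p.coeff i) (φ (m ^ (N - i)))) * MonoidAlgebra.single m b ^ i = 0 := by
      have h5 : ∀ i ∈ Finset.range N, (MonoidAlgebra.single (m ^ (N - i))
          (𝒜.comp (p.coeff i) (φ (m ^ (N - i)))) * MonoidAlgebra.single m b ^ i
            : MonoidAlgebra K F) = MonoidAlgebra.single (m ^ N)
            (𝒜.comp (p.coeff i) (φ (m ^ (N - i))) * b ^ i) := by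
        intro i hi
        rw [MonoidAlgebra.single_pow, MonoidAlgebra.single_mul_single, ← pow_add,
          Nat.sub_add_cancel (Finset.mem_range.mp hi).le]
      rw [Finset.sum_congr rfl h5, MonoidAlgebra.single_pow]
      have h6 := map_sum (MonoidAlgebra.singleAddHom (R := K) (m ^ N))
        (fun i => 𝒜.comp (p.coeff i) (φ (m ^ (N - i))) * b ^ i) (Finset.range N)
      simp only [MonoidAlgebra.singleAddHom_apply] at h6
      rw [← h6, ← MonoidAlgebra.single_add, e1, MonoidAlgebra.single_zero]
    simpa [co] using e2

theorem exists_finset_lift [UniqueProds F] (hK : 𝒜.IsGradedField) {k : Subring K}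
    (hk : 𝒜.IsGradedSubfield k)
    {A : Subring K} (hkA : k ≤ A) (hAgr : 𝒜.IsGradedSubring A) {s : Set K} (hsf : s.Finite)
    (hA : A = Subring.closure ((k : Set K) ∪ s)) {e : K → F}
    (he : ∀ a ∈ s, a ∈ 𝒜.deg (φ (e a)))
    (hF : ∀ M : Subgroup F, M.FG)
    (hfrac : ∀ z : K, 𝒜.IsHomog z → ∃ a ∈ A, ∃ b ∈ A, 𝒜.IsHomog b ∧ b ≠ 0 ∧ z * b = a) :
    ∃ T : Set K, T.Finite ∧ (∀ t ∈ T, 𝒜.IsHomog t ∧ IntegralOver A t) ∧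
      ∀ (m : F) (z : K), z ∈ 𝒜.deg (φ m) → IntegralOver A z → z ∈ Submodule.span A T := by
  have hDD := 𝒜.isDomain_lift φ hK A
  have hDE := 𝒜.isDomain_lift φ hK ⊤
  have hft := 𝒜.lift_finiteType φ hK hk hkA hsf hA he hF
  let _ := (𝒜.baseHom φ hkA).toAlgebra
  have : Algebra.FiniteType (𝒜.base k) (𝒜.lift φ A) := hft
  have hfld := 𝒜.base_isField hK hk
  let ι := Subring.inclusion (𝒜.lift_mono φ (le_top : A ≤ ⊤))
  let _ : Algebra (𝒜.lift φ A) (𝒜.lift φ ⊤) := ι.toAlgebra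
  have hfin := domain_integralClosure_finite (𝒜.base k) (𝒜.lift φ A) (𝒜.lift φ ⊤) hfld
    (Subring.inclusion_injective _) (by
      rintro ⟨z, hz⟩
      obtain ⟨d, hd, hd'⟩ := 𝒜.frac_lift φ hK (𝒜.frac_single φ hK hk hkA hA he hfrac) z hz
      exact ⟨d, hd, ⟨_, hd'⟩, Subtype.ext rfl⟩)
  have hnb : IsNoetherianRing (𝒜.base k) := by
    let _ := hfld.toField
    exact inferInstanceAs (IsNoetherianRing (𝒜.base k))
  have hnD : IsNoetherianRing (𝒜.lift φ A) :=
    Algebra.FiniteType.isNoetherianRing (𝒜.base k) (𝒜.lift φ A)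
  let X : Set (𝒜.lift φ ⊤) := {x | ∃ (m : F) (b : K), b ∈ 𝒜.deg (φ m) ∧ IntegralOver A b ∧
    x.1 = MonoidAlgebra.single m b}
  have hX : Submodule.span (𝒜.lift φ A) X
      ≤ Subalgebra.toSubmodule (integralClosure (𝒜.lift φ A) (𝒜.lift φ ⊤)) := by
    rw [Submodule.span_le]
    rintro x ⟨m, b, hb, hbi, hx⟩
    have h1 := 𝒜.integral_lift φ hAgr hb hbi
    have h2 : x = ⟨MonoidAlgebra.single m b, 𝒜.single_mem_lift φ (Subring.mem_top b) hb⟩ :=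
      Subtype.ext hx
    rw [h2]
    exact h1
  have hfg : (Submodule.span (𝒜.lift φ A) X).FG :=
    Submodule.FG.of_le (Module.Finite.iff_fg.mp hfin) hX
  obtain ⟨T', hT'X, hT'⟩ := Submodule.fg_span_iff_fg_span_finset_subset X |>.mp hfg
  refine ⟨(fun x : 𝒜.lift φ ⊤ => aug x.1) '' (T' : Set (𝒜.lift φ ⊤)),
    T'.finite_toSet.image _, ?_, ?_⟩
  · rintro _ ⟨x, hx, rfl⟩
    obtain ⟨m, b, hb, hbi, hxb⟩ := hT'X hx
    simp only [hxb, aug_single]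
    exact ⟨⟨_, hb⟩, hbi⟩
  · intro m z hz hzi
    have h1 : (⟨MonoidAlgebra.single m z, 𝒜.single_mem_lift φ (Subring.mem_top z) hz⟩ : 𝒜.lift φ ⊤)
        ∈ Submodule.span (𝒜.lift φ A) X := Submodule.subset_span ⟨m, z, hz, hzi, rfl⟩
    rw [hT'] at h1
    have h2 : ∀ x ∈ Submodule.span (𝒜.lift φ A) (T' : Set (𝒜.lift φ ⊤)), aug x.1 ∈
        Submodule.span A ((fun x : 𝒜.lift φ ⊤ => aug x.1) '' (T' : Set (𝒜.lift φ ⊤))) := by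
      intro x hx
      induction hx using Submodule.span_induction with
      | mem x hx => exact Submodule.subset_span ⟨x, hx, rfl⟩
      | zero => 
        have : aug ((0 : 𝒜.lift φ ⊤) : MonoidAlgebra K F) = 0 := map_zero aug
        rw [this]
        exact Submodule.zero_mem _
      | add x y _ _ hx hy =>
        have : aug ((x + y : 𝒜.lift φ ⊤) : MonoidAlgebra K F) = aug x.1 + aug y.1 := map_add aug _ _
        rw [this]
        exact Submodule.add_mem _ hx hy
      | smul r x _ hx =>
        have : aug ((r • x : 𝒜.lift φ ⊤) : MonoidAlgebra K F) = aug r.1 * aug x.1 := map_mul aug _ _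
        rw [this]
        exact Submodule.smul_mem _ (⟨aug r.1, 𝒜.aug_mem φ r.2⟩ : A) hx
    have h3 := h2 _ h1
    rwa [aug_single] at h3

theorem exists_finset [UniqueProds F] (hK : 𝒜.IsGradedField) {k : Subring K}
    (hk : 𝒜.IsGradedSubfield k)
    {A : Subring K} (hkA : k ≤ A) (hAgr : 𝒜.IsGradedSubring A) {s : Set K} (hsf : s.Finite)
    (hA : A = Subring.closure ((k : Set K) ∪ s)) {e : K → F}
    (he : ∀ a ∈ s, a ∈ 𝒜.deg (φ (e a)))
    (hF : ∀ M : Subgroup F, M.FG)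
    (hfrac : ∀ z : K, 𝒜.IsHomog z → ∃ a ∈ A, ∃ b ∈ A, 𝒜.IsHomog b ∧ b ≠ 0 ∧ z * b = a) :
    ∃ T : Set K, T.Finite ∧ (∀ t ∈ T, 𝒜.IsHomog t ∧ IntegralOver A t) ∧
      ∀ z : K, (∀ g, IntegralOver A (𝒜.comp z g)) → z ∈ Submodule.span A T := by
  have := hK.1
  obtain ⟨T, hTf, hT, hspan⟩ := 𝒜.exists_finset_lift φ hK hk hkA hAgr hsf hA he hF hfrac
  refine ⟨T, hTf, hT, fun z hz => ?_⟩
  refine 𝒜.homog_induction (Pr := fun z => z ∈ Submodule.span A T) z (Submodule.zero_mem _)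
    (fun a b => Submodule.add_mem _) (fun g => ?_)
  have hzi := hz g
  have hzg := 𝒜.comp_mem z g
  generalize 𝒜.comp z g = w at hzi hzg
  clear hz z
  by_cases hw0 : w = 0
  · rw [hw0]; exact Submodule.zero_mem _
  obtain ⟨a, ha, b, hb, ⟨h, hbh⟩, hb0, hab⟩ := hfrac w ⟨_, hzg⟩
  have hag : a ∈ 𝒜.deg (g * h) := hab ▸ 𝒜.mul_mem hzg hbh
  have ha0 : a ≠ 0 := by
    rw [← hab]
    exact fun h0 => hb0 (((hK.2 w ⟨_, hzg⟩ hw0).mul_right_eq_zero).mp h0)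
  obtain ⟨c, hc, hc0, m, hcm⟩ := 𝒜.degree_lemma φ hk.1 he a (hA ▸ ha) _
    (by rwa [𝒜.comp_of_mem hag])
  obtain ⟨d, hd, hd0, n, hdn⟩ := 𝒜.degree_lemma φ hk.1 he b (hA ▸ hb) _
    (by rwa [𝒜.comp_of_mem hbh])
  have hci := 𝒜.inverse_mem hK hcm hc0
  have hdi := 𝒜.inverse_mem hK hdn hd0
  have hck := hkA (hk.2 c hc ⟨_, hcm⟩ hc0)
  have hdk := hkA (hk.2 d hd ⟨_, hdn⟩ hd0)
  have h1 : Ring.inverse c * d * w ∈ 𝒜.deg (φ (m * n⁻¹)) := by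
    have h2 := 𝒜.mul_mem (𝒜.mul_mem hci hdn) hzg
    have h3 : (g * h * (φ m)⁻¹)⁻¹ * (h * (φ n)⁻¹) * g = φ (m * n⁻¹) := by
      rw [map_mul, map_inv, mul_inv, mul_inv, inv_inv]
      have : g⁻¹ * h⁻¹ * φ m * (h * (φ n)⁻¹) * g
        = (g⁻¹ * g) * (h⁻¹ * h) * (φ m * (φ n)⁻¹) := by ac_rfl
      rw [this]; simp
    rwa [h3] at h2
  have h4 : IntegralOver A (Ring.inverse c * d * w) := by
    rw [integralOver_iff] at hzi ⊢
    exact IsIntegral.mul (isIntegral_algebraMap (x := (⟨_, A.mul_mem hck (hkA hd)⟩ : A))) hzi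
  have h5 := Submodule.smul_mem _ (⟨_, A.mul_mem (hkA hc) hdk⟩ : A) (hspan _ _ h1 h4)
  have h6 : w = (⟨_, A.mul_mem (hkA hc) hdk⟩ : A) • (Ring.inverse c * d * w) := by
    change w = c * Ring.inverse d * (Ring.inverse c * d * w)
    have e1 := Ring.mul_inverse_cancel c (hK.2 c ⟨_, hcm⟩ hc0)
    have e2 := Ring.mul_inverse_cancel d (hK.2 d ⟨_, hdn⟩ hd0)
    calc w = (c * Ring.inverse c) * (d * Ring.inverse d) * w := by rw [e1, e2]; ring
      _ = _ := by ring
  rw [h6]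
  exact h5

theorem free_fg (ι : Type*) [Finite ι] (M : Subgroup (Multiplicative (ι → ℤ))) : M.FG := by
  rw [Subgroup.fg_iff_add_fg]
  have h : (AddSubgroup.toIntSubmodule (Subgroup.toAddSubgroup' M)).FG := IsNoetherian.noetherian _
  rw [Submodule.fg_iff_addSubgroup_fg] at h
  exact h

/-- The degree homomorphism on the free group. -/
def freeHom {ι : Type*} [Fintype ι] (g : ι → G) : Multiplicative (ι → ℤ) →* G where
  toFun m := ∏ i, g i ^ (m.toAdd i)
  map_one' := by simp
  map_mul' m n := by simp [zpow_add, Finset.prod_mul_distrib]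

theorem exists_finset' (hK : 𝒜.IsGradedField) {k : Subring K}
    (hk : 𝒜.IsGradedSubfield k)
    {A : Subring K} (hkA : k ≤ A) (hAgr : 𝒜.IsGradedSubring A) {s : Finset K}
    (hs : ∀ a ∈ s, 𝒜.IsHomog a)
    (hA : A = Subring.closure ((k : Set K) ∪ s))
    (hfrac : ∀ z : K, 𝒜.IsHomog z → ∃ a ∈ A, ∃ b ∈ A, 𝒜.IsHomog b ∧ b ≠ 0 ∧ z * b = a) :
    ∃ T : Set K, T.Finite ∧ (∀ t ∈ T, 𝒜.IsHomog t ∧ IntegralOver A t) ∧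
      ∀ z : K, (∀ g, IntegralOver A (𝒜.comp z g)) → z ∈ Submodule.span A T := by
  classical
  choose! g hg using hs
  let φ : Multiplicative (s → ℤ) →* G := freeHom (fun i : s => g i)
  refine 𝒜.exists_finset φ (e := fun a => Multiplicative.ofAdd fun i : s => if i.1 = a then 1 else 0)
    hK hk hkA hAgr s.finite_toSet hA ?_ (free_fg s) hfrac
  intro a ha
  have : φ (Multiplicative.ofAdd fun i : s => if i.1 = a then 1 else 0) = g a := by
    change ∏ i : s, g i ^ (if i.1 = a then (1 : ℤ) else 0) = g a
    rw [Finset.prod_eq_single (⟨a, ha⟩ : s)]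
    · simp
    · intro b _ hb
      have : b.1 ≠ a := fun h => hb (Subtype.ext h)
      simp [this]
    · simp
  rw [this]
  exact hg a ha

end Main

end GradedStr

namespace GradedStr

section Final

variable {G : Type u} [CommGroup G] {K : Type v} [CommRing K] (𝒜 : GradedStr G K)

theorem integralOver_zero (A : Subring K) : IntegralOver A 0 := by
  rw [integralOver_iff]; exact isIntegral_zero

theorem integralOver_comp_of_homog {A : Subring K} {x : K} (hx : 𝒜.IsHomog x)
    (hi : IntegralOver A x) (g : G) : IntegralOver A (𝒜.comp x g) := by
  obtain ⟨h, hx⟩ := hx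
  by_cases hg : g = h
  · rw [hg, 𝒜.comp_of_mem hx]; exact hi
  · rw [𝒜.comp_of_mem_ne hx hg]; exact integralOver_zero A

/-- The graded integral closure as a subring. -/
def gic (A : Subring K) : Subring K where
  carrier := {z | ∀ g, IntegralOver A (𝒜.comp z g)}
  zero_mem' := fun g => by rw [𝒜.comp_zero']; exact integralOver_zero A
  one_mem' := 𝒜.integralOver_comp_of_homog ⟨1, 𝒜.one_mem⟩
    (by rw [integralOver_iff]; exact isIntegral_one)
  add_mem' := fun {x y} hx hy g => by
    have h1 := hx g
    have h2 := hy g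
    rw [𝒜.comp_add]
    rw [integralOver_iff] at h1 h2 ⊢
    exact h1.add h2
  neg_mem' := fun {x} hx g => by
    have h1 := hx g
    have h2 : 𝒜.comp (-x) g = -𝒜.comp x g := map_neg (𝒜.compHom g) x
    rw [h2]
    rw [integralOver_iff] at h1 ⊢
    exact h1.neg
  mul_mem' := fun {x y} hx hy => by
    refine 𝒜.homog_induction (Pr := fun y => ∀ g, IntegralOver A (𝒜.comp (x * y) g)) y ?_ ?_ ?_
    · intro g; rw [mul_zero, 𝒜.comp_zero']; exact integralOver_zero A
    · intro a b ha hb g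
      have h1 := ha g
      have h2 := hb g
      rw [mul_add, 𝒜.comp_add]
      rw [integralOver_iff] at h1 h2 ⊢
      exact h1.add h2
    · intro h g
      rw [𝒜.comp_mul_homog' (𝒜.comp_mem y h)]
      have h1 := hx (g * h⁻¹)
      have h2 := hy h
      rw [integralOver_iff] at h1 h2 ⊢
      exact h1.mul h2

theorem le_gic {A : Subring K} (hA : 𝒜.IsGradedSubring A) : A ≤ 𝒜.gic A := by
  intro x hx g
  rw [integralOver_iff]
  exact isIntegral_algebraMap (x := (⟨_, hA x hx g⟩ : A))

end Final

end GradedStr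

/-- Let `k` be a `G`-graded field and `A` a finitely generated graded
`k`-algebra that is a graded domain, with graded fraction field `K = Frac_G(A)`
(realized as the ambient graded field: every homogeneous element of `K` is a ratio of
homogeneous elements of `A`).  Then the graded integral closure of `A` in `K` is a
finite `A`-module; in particular it is a finitely generated graded `k`-algebra. -/
theorem graded_integral_closure_finite
    {G : Type u} [CommGroup G] {K : Type v} [CommRing K]
    (𝒜 : GradedStr G K) (hK : 𝒜.IsGradedField)
    (k : Subring K) (hk : 𝒜.IsGradedSubfield k)
    (A : Subring K) (hkA : k ≤ A) (hAgr : 𝒜.IsGradedSubring A)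
    (hAfg : ∃ s : Finset K, (∀ a ∈ s, 𝒜.IsHomog a) ∧
      A = Subring.closure (↑k ∪ ↑s))
    (hfrac : ∀ z : K, 𝒜.IsHomog z →
      ∃ a ∈ A, ∃ b ∈ A, 𝒜.IsHomog b ∧ b ≠ 0 ∧ z * b = a) :
    (∃ (n : ℕ) (e : Fin n → K),
      (∀ i, ∀ g, IntegralOver A (𝒜.comp (e i) g)) ∧
      ∀ z : K, (∀ g, IntegralOver A (𝒜.comp z g)) →
        ∃ c : Fin n → K, (∀ i, c i ∈ A) ∧ z = ∑ i, c i * e i) ∧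
    (∃ (m : ℕ) (f : Fin m → K), (∀ i, 𝒜.IsHomog (f i)) ∧
      {z : K | ∀ g, IntegralOver A (𝒜.comp z g)}
        = ↑(Subring.closure (↑k ∪ Set.range f))) := by
  obtain ⟨s, hs, hA⟩ := hAfg
  obtain ⟨T, hTf, hT, hspan⟩ := 𝒜.exists_finset' hK hk hkA hAgr hs hA hfrac
  constructor
  · obtain ⟨n, e, he⟩ := hTf.fin_embedding
    refine ⟨n, e, ?_, ?_⟩
    · intro i g
      have hi : e i ∈ T := he ▸ Set.mem_range_self i
      exact 𝒜.integralOver_comp_of_homog (hT _ hi).1 (hT _ hi).2 g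
    · intro z hz
      have h1 := hspan z hz
      rw [← he, Submodule.mem_span_range_iff_exists_fun] at h1
      obtain ⟨c, hc⟩ := h1
      exact ⟨fun i => c i, fun i => (c i).2, hc.symm⟩
  · obtain ⟨n, f, hf⟩ := (hTf.union s.finite_toSet).fin_embedding
    refine ⟨n, f, ?_, ?_⟩
    · intro i
      have hi : f i ∈ T ∪ ↑s := hf ▸ Set.mem_range_self i
      rcases hi with hi | hi
      · exact (hT _ hi).1
      · exact hs _ hi
    · rw [hf]
      apply Set.Subset.antisymm
      · intro z hz
        have h1 := hspan z hz
        have hle : A ≤ Subring.closure ((k : Set K) ∪ (T ∪ ↑s)) := by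
          rw [hA]
          refine Subring.closure_mono (Set.union_subset_union_right _ Set.subset_union_right)
        change z ∈ Subring.closure ((k : Set K) ∪ (T ∪ ↑s))
        clear hz
        induction h1 using Submodule.span_induction with
        | mem x hx => exact Subring.subset_closure (Or.inr (Or.inl hx))
        | zero => exact Subring.zero_mem _
        | add x y _ _ hx hy => exact Subring.add_mem _ hx hy
        | smul r x _ hx => exact Subring.mul_mem _ (hle r.2) hx
      · change Subring.closure ((k : Set K) ∪ (T ∪ ↑s)) ≤ 𝒜.gic A
        rw [Subring.closure_le]
        rintro x (hx | hx | hx)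
        · exact 𝒜.le_gic hAgr (hkA hx)
        · exact 𝒜.integralOver_comp_of_homog (hT _ hx).1 (hT _ hx).2
        · refine 𝒜.le_gic hAgr ?_
          rw [hA]
          exact Subring.subset_closure (Or.inr hx)
end

section
/- Let K'/K be an integral extension of G-graded fields (every homogeneous element of K' is integral over K), let O be a graded valuation ring of K, and let O' denote the graded integral closure of O in K'. Then: every graded prime ideal m' of O' lying over the graded maximal ideal m_O of O is a graded maximal ideal; for each such m' the graded localization O'_{m'} is a graded valuation ring of K' whose graded maximal ideal contracts to m' in O'; and every graded valuation ring of K' dominating O arises in this way. -/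
universe u v

section Statement10

variable {G : Type u} [CommGroup G] {L : Type v} [CommRing L]

/-- The graded integral closure of the subring `S` inside the ambient graded ring:
the elements all of whose homogeneous components are integral over `S`. -/
def gIntClosure (𝒜 : GradedStr G L) (S : Subring L) : Set L :=
  {x : L | ∀ g, IntegralOver S (𝒜.comp x g)}

/-- A homogeneous (graded) ideal of the graded subring `S` (given as a subset). -/
def IsHomogIdealOf (𝒜 : GradedStr G L) (S p : Set L) : Prop :=
  p ⊆ S ∧ (0 : L) ∈ p ∧ (∀ x ∈ p, ∀ y ∈ p, x + y ∈ p) ∧ (∀ x ∈ p, -x ∈ p) ∧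
    (∀ s ∈ S, ∀ x ∈ p, s * x ∈ p) ∧ (∀ x ∈ p, ∀ g, 𝒜.comp x g ∈ p)

/-- A graded prime ideal of the graded subring `S` (given as a subset). -/
def IsGradedPrimeOf (𝒜 : GradedStr G L) (S p : Set L) : Prop :=
  IsHomogIdealOf 𝒜 S p ∧ (1 : L) ∉ p ∧
    ∀ a ∈ S, ∀ b ∈ S, 𝒜.IsHomog a → 𝒜.IsHomog b → a * b ∈ p → a ∈ p ∨ b ∈ p

/-- The graded localization of the graded subring `S` at the homogeneous elements not
in `p`, computed inside the ambient graded field. -/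
def gradedLoc (𝒜 : GradedStr G L) (S p : Set L) : Set L :=
  {x : L | ∃ a ∈ S, ∃ s ∈ S, 𝒜.IsHomog s ∧ s ∉ p ∧ s * x = a}

/-- The graded maximal ideal of a graded-local graded subring (given as a subset):
the elements all of whose nonzero homogeneous components are non-invertible in `S`. -/
def gmaxIdeal (𝒜 : GradedStr G L) (S : Set L) : Set L :=
  {x : L | x ∈ S ∧ ∀ g, 𝒜.comp x g ≠ 0 → Ring.inverse (𝒜.comp x g) ∉ S}

/-- A graded valuation ring of the ambient graded field: a graded subring (given as a
subset) such that every nonzero homogeneous `f` satisfies `f ∈ S` or `f⁻¹ ∈ S`. -/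
def IsGVRing (𝒜 : GradedStr G L) (S : Set L) : Prop :=
  (0 : L) ∈ S ∧ (1 : L) ∈ S ∧ (∀ x ∈ S, ∀ y ∈ S, x + y ∈ S) ∧
    (∀ x ∈ S, -x ∈ S) ∧ (∀ x ∈ S, ∀ y ∈ S, x * y ∈ S) ∧
    (∀ x ∈ S, ∀ g, 𝒜.comp x g ∈ S) ∧
    ∀ f : L, f ≠ 0 → 𝒜.IsHomog f → f ∈ S ∨ Ring.inverse f ∈ S

namespace GVHelp

/-- additive closure of a set -/
def AddClosed (T : Set L) : Prop := (0 : L) ∈ T ∧ ∀ x ∈ T, ∀ y ∈ T, x + y ∈ T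

theorem mem_of_comp (𝒜 : GradedStr G L) {T : Set L} (hT : AddClosed T) {x : L}
    (h : ∀ g, 𝒜.comp x g ∈ T) : x ∈ T := by
  rw [← 𝒜.sum_comp x]
  exact finsum_induction (fun y => y ∈ T) hT.1 (fun x y hx hy => hT.2 x hx y hy) h

theorem comp_zero (𝒜 : GradedStr G L) (g : G) : 𝒜.comp 0 g = 0 :=
  𝒜.comp_of_mem (𝒜.deg g).zero_mem

theorem comp_neg (𝒜 : GradedStr G L) (x : L) (g : G) : 𝒜.comp (-x) g = - 𝒜.comp x g := by
  have h := 𝒜.comp_add x (-x) g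
  rw [add_neg_cancel, comp_zero] at h
  exact (neg_eq_of_add_eq_zero_right h.symm).symm

theorem comp_sum (𝒜 : GradedStr G L) {ι : Type*} (s : Finset ι) (f : ι → L) (g : G) :
    𝒜.comp (∑ i ∈ s, f i) g = ∑ i ∈ s, 𝒜.comp (f i) g := by
  classical
  induction s using Finset.induction_on with
  | empty => simp [comp_zero]
  | insert a s ha ih => rw [Finset.sum_insert ha, Finset.sum_insert ha, 𝒜.comp_add, ih]

theorem comp_mul_left (𝒜 : GradedStr G L) {x : L} {h : G} (hx : x ∈ 𝒜.deg h) (y : L) (g : G) :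
    𝒜.comp (x * y) (h * g) = x * 𝒜.comp y g := by
  refine mem_of_comp 𝒜 (T := {y | 𝒜.comp (x * y) (h * g) = x * 𝒜.comp y g}) ⟨?_, ?_⟩ ?_
  · simp [comp_zero]
  · intro a ha b hb
    simp only [Set.mem_ofPred_eq] at *
    rw [mul_add, 𝒜.comp_add, ha, hb, 𝒜.comp_add, mul_add]
  · intro k
    simp only [Set.mem_ofPred_eq]
    have hk := 𝒜.comp_mem y k
    by_cases hgk : g = k
    · subst hgk
      rw [𝒜.comp_of_mem (𝒜.mul_mem hx hk), 𝒜.comp_of_mem hk]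
    · rw [𝒜.comp_of_mem_ne (𝒜.mul_mem hx hk) (by simpa using hgk), 𝒜.comp_of_mem_ne hk hgk,
        mul_zero]

theorem comp_mul_left' (𝒜 : GradedStr G L) {x : L} {h : G} (hx : x ∈ 𝒜.deg h) (y : L) (g : G) :
    𝒜.comp (x * y) g = x * 𝒜.comp y (h⁻¹ * g) := by
  rw [← comp_mul_left 𝒜 hx, mul_inv_cancel_left]

theorem mul_mem_of_comp (𝒜 : GradedStr G L) {T : Set L} (hT : AddClosed T) {x y : L}
    (h : ∀ g k, 𝒜.comp x g * 𝒜.comp y k ∈ T) : x * y ∈ T := by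
  refine mem_of_comp 𝒜 (T := {x | x * y ∈ T}) ⟨by simpa using hT.1, ?_⟩ ?_
  · intro a ha b hb
    simp only [Set.mem_ofPred_eq] at *
    rw [add_mul]
    exact hT.2 _ ha _ hb
  · intro g
    refine mem_of_comp 𝒜 (T := {y | 𝒜.comp x g * y ∈ T}) ⟨by simpa using hT.1, ?_⟩ ?_
    · intro a ha b hb
      simp only [Set.mem_ofPred_eq] at *
      rw [mul_add]
      exact hT.2 _ ha _ hb
    · intro k
      exact h g k

theorem pow_mem (𝒜 : GradedStr G L) {x : L} {g : G} (hx : x ∈ 𝒜.deg g) (n : ℕ) :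
    x ^ n ∈ 𝒜.deg (g ^ n) := by
  induction n with
  | zero => simpa using 𝒜.one_mem
  | succ n ih => rw [pow_succ, pow_succ]; exact 𝒜.mul_mem ih hx

theorem inv_mem (𝒜 : GradedStr G L) {x : L} {g : G} (hx : x ∈ 𝒜.deg g) (hu : IsUnit x) :
    Ring.inverse x ∈ 𝒜.deg g⁻¹ := by
  have h1 : x * Ring.inverse x = 1 := Ring.mul_inverse_cancel x hu
  have h2 := comp_mul_left 𝒜 hx (Ring.inverse x) g⁻¹
  rw [h1, mul_inv_cancel, 𝒜.comp_of_mem 𝒜.one_mem, ← h1] at h2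
  rw [hu.mul_left_cancel h2]
  exact 𝒜.comp_mem _ _

theorem integralOver_iff (S : Subring L) (x : L) : IntegralOver S x ↔ IsIntegral S x := by
  constructor
  · rintro ⟨p, hp, hc, he⟩
    rcases subsingleton_or_nontrivial L with hsub | hnt
    · rw [Subsingleton.elim x 0]; exact isIntegral_zero
    have hl : p ∈ Polynomial.lifts (algebraMap S L) := by
      rw [Polynomial.lifts_iff_coeff_lifts]
      intro n
      exact ⟨⟨p.coeff n, hc n⟩, rfl⟩
    obtain ⟨q, hq, -, hqm⟩ := Polynomial.lifts_and_degree_eq_and_monic hl hp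
    refine ⟨q, hqm, ?_⟩
    rw [← Polynomial.eval_map, hq, he]
  · rintro ⟨q, hqm, hq⟩
    refine ⟨q.map (algebraMap S L), hqm.map _, ?_, ?_⟩
    · intro n
      rw [Polynomial.coeff_map]
      exact (q.coeff n).2
    · rw [Polynomial.eval_map, hq]

theorem exists_homog_eq (𝒜 : GradedStr G L) {S : Subring L} (hS : 𝒜.IsGradedSubring S)
    {x : L} {g : G} (hx : x ∈ 𝒜.deg g) (hi : IntegralOver S x) :
    ∃ (n : ℕ) (c : ℕ → L), (∀ i, c i ∈ S) ∧ (∀ i, c i ∈ 𝒜.deg (g ^ n * (g ^ i)⁻¹)) ∧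
      c n = 1 ∧ ∑ i ∈ Finset.range (n + 1), c i * x ^ i = 0 := by
  obtain ⟨p, hp, hc, he⟩ := hi
  refine ⟨p.natDegree, fun i => 𝒜.comp (p.coeff i) (g ^ p.natDegree * (g ^ i)⁻¹), ?_, ?_, ?_, ?_⟩
  · intro i; exact hS _ (hc i) _
  · intro i; exact 𝒜.comp_mem _ _
  · simp only [Polynomial.coeff_natDegree, hp.leadingCoeff, mul_inv_cancel]
    exact 𝒜.comp_of_mem 𝒜.one_mem
  · rw [Polynomial.eval_eq_sum_range] at he
    have h := congrArg (fun z => 𝒜.comp z (g ^ p.natDegree)) he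
    simp only [comp_zero, comp_sum] at h
    rw [← h]
    refine Finset.sum_congr rfl fun i _ => ?_
    beta_reduce
    rw [mul_comm (p.coeff i), comp_mul_left' 𝒜 (pow_mem 𝒜 hx i), mul_comm,
      mul_comm (g ^ p.natDegree)]

theorem integral_lead (O : Subring L) {f : L} (n : ℕ) (c : ℕ → L)
    (hc : ∀ i, IsIntegral O (c i)) (h : ∑ i ∈ Finset.range (n + 1), c i * f ^ i = 0) :
    IsIntegral O (c n * f) := by
  let R := integralClosure O L
  let d : ℕ → R := fun i => ⟨c i, hc i⟩
  by_cases h0 : c n = 0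
  · rw [h0, zero_mul]; exact isIntegral_zero
  have hd0 : d n ≠ 0 := fun h => h0 (congrArg Subtype.val h)
  let p : Polynomial R := ∑ i ∈ Finset.range (n + 1), Polynomial.monomial i (d i)
  have hco : ∀ k, p.coeff k = if k < n + 1 then d k else 0 := by
    intro k
    simp only [p, Polynomial.finsetSum_coeff, Polynomial.coeff_monomial]
    simp
  have hdeg : p.natDegree = n := by
    apply le_antisymm
    · rw [Polynomial.natDegree_le_iff_coeff_eq_zero]
      intro k hk
      rw [hco, if_neg (by omega)]
    · apply Polynomial.le_natDegree_of_ne_zero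
      rw [hco, if_pos (by omega)]
      exact hd0
  have hlead : p.leadingCoeff = d n := by
    rw [Polynomial.leadingCoeff, hdeg, hco, if_pos (by omega)]
  have hz : Polynomial.aeval f p = 0 := by
    simp only [p, map_sum, Polynomial.aeval_monomial]
    exact h
  have := isIntegral_leadingCoeff_smul p f hz
  rw [hlead] at this
  exact isIntegral_trans (R := O) (A := R) _ this

section closure
variable (𝒜 : GradedStr G L) (O : Subring L)

theorem ic_iff (x : L) : x ∈ gIntClosure 𝒜 O ↔ ∀ g, IsIntegral O (𝒜.comp x g) :=
  forall_congr' fun _ => integralOver_iff _ _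

theorem ic_homog {x : L} {g : G} (hx : x ∈ 𝒜.deg g) :
    x ∈ gIntClosure 𝒜 O ↔ IsIntegral O x := by
  rw [ic_iff]
  constructor
  · intro h
    have := h g
    rwa [𝒜.comp_of_mem hx] at this
  · intro h k
    by_cases hk : k = g
    · subst hk; rwa [𝒜.comp_of_mem hx]
    · rw [𝒜.comp_of_mem_ne hx hk]; exact isIntegral_zero

theorem ic_comp {x : L} (hx : x ∈ gIntClosure 𝒜 O) (g : G) : 𝒜.comp x g ∈ gIntClosure 𝒜 O :=
  (ic_homog 𝒜 O (𝒜.comp_mem x g)).2 ((ic_iff 𝒜 O x).1 hx g)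

theorem ic_add {x y : L} (hx : x ∈ gIntClosure 𝒜 O) (hy : y ∈ gIntClosure 𝒜 O) :
    x + y ∈ gIntClosure 𝒜 O := by
  rw [ic_iff] at *
  intro g
  rw [𝒜.comp_add]
  exact (hx g).add (hy g)

theorem ic_neg {x : L} (hx : x ∈ gIntClosure 𝒜 O) : -x ∈ gIntClosure 𝒜 O := by
  rw [ic_iff] at *
  intro g
  rw [comp_neg]
  exact (hx g).neg

theorem ic_zero : (0 : L) ∈ gIntClosure 𝒜 O := by
  rw [ic_homog 𝒜 O (𝒜.deg 1).zero_mem]; exact isIntegral_zero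

theorem ic_one : (1 : L) ∈ gIntClosure 𝒜 O := by
  rw [ic_homog 𝒜 O 𝒜.one_mem]; exact isIntegral_one

theorem ic_addClosed : AddClosed (gIntClosure 𝒜 O) :=
  ⟨ic_zero 𝒜 O, fun _ hx _ hy => ic_add 𝒜 O hx hy⟩

theorem ic_mul {x y : L} (hx : x ∈ gIntClosure 𝒜 O) (hy : y ∈ gIntClosure 𝒜 O) :
    x * y ∈ gIntClosure 𝒜 O := by
  refine mul_mem_of_comp 𝒜 (ic_addClosed 𝒜 O) fun g k => ?_
  rw [ic_homog 𝒜 O (𝒜.mul_mem (𝒜.comp_mem x g) (𝒜.comp_mem y k))]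
  exact ((ic_iff 𝒜 O x).1 hx g).mul ((ic_iff 𝒜 O y).1 hy k)

theorem ic_of_mem (hO : 𝒜.IsGradedSubring O) {x : L} (hx : x ∈ O) : x ∈ gIntClosure 𝒜 O := by
  rw [ic_iff]
  intro g
  exact isIntegral_algebraMap (R := O) (x := ⟨_, hO x hx g⟩)

end closure

theorem sum_mem_of (T : Set L) (hT : AddClosed T) {ι : Type*} (s : Finset ι) (f : ι → L)
    (h : ∀ i ∈ s, f i ∈ T) : ∑ i ∈ s, f i ∈ T :=
  Finset.sum_induction f (fun z => z ∈ T) (fun x y hx hy => hT.2 x hx y hy) hT.1 h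

theorem gmax_homog (𝒜 : GradedStr G L) (S : Set L) {x : L} {g : G} (hx : x ∈ 𝒜.deg g) :
    x ∈ gmaxIdeal 𝒜 S ↔ x ∈ S ∧ (x ≠ 0 → Ring.inverse x ∉ S) := by
  constructor
  · rintro ⟨h, h'⟩
    have := h' g
    rw [𝒜.comp_of_mem hx] at this
    exact ⟨h, this⟩
  · rintro ⟨h, h'⟩
    refine ⟨h, fun k => ?_⟩
    by_cases hk : k = g
    · subst hk; rwa [𝒜.comp_of_mem hx]
    · rw [𝒜.comp_of_mem_ne hx hk]; exact fun h => absurd rfl h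

/-- Among finitely many homogeneous elements of `K`, not all zero, one divides all others. -/
theorem exists_max (𝒜 : GradedStr G L) (hL : 𝒜.IsGradedField)
    (K : Subring L) (hK : 𝒜.IsGradedSubfield K) (O : Subring L)
    (hOval : ∀ f ∈ K, f ≠ 0 → 𝒜.IsHomog f → f ∈ O ∨ Ring.inverse f ∈ O)
    (c : ℕ → L) (hc : ∀ i, c i ∈ K) (hh : ∀ i, 𝒜.IsHomog (c i)) (n : ℕ)
    (hne : ∃ i < n, c i ≠ 0) :
    ∃ j < n, c j ≠ 0 ∧ ∀ i < n, c i * Ring.inverse (c j) ∈ O := by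
  induction n with
  | zero => obtain ⟨i, hi, -⟩ := hne; omega
  | succ n ih =>
    by_cases hne' : ∃ i < n, c i ≠ 0
    · obtain ⟨j, hj, hj0, hjm⟩ := ih hne'
      have huj := hL.2 _ (hh j) hj0
      have hj1 := Ring.mul_inverse_cancel _ huj
      by_cases hn0 : c n * Ring.inverse (c j) ∈ O
      · refine ⟨j, by omega, hj0, fun i hi => ?_⟩
        rcases Nat.lt_succ_iff_lt_or_eq.1 hi with h | rfl
        · exact hjm i h
        · exact hn0
      · have hcn0 : c n ≠ 0 := by
          intro h; rw [h, zero_mul] at hn0; exact hn0 O.zero_mem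
        have hun := hL.2 _ (hh n) hcn0
        have hn1 := Ring.mul_inverse_cancel _ hun
        have hmem : c j * Ring.inverse (c n) ∈ O := by
          have hjn : IsUnit (c j * Ring.inverse (c n)) := huj.mul hun.ringInverse
          have := hL.1
          obtain ⟨gj, hgj⟩ := hh j
          obtain ⟨gn, hgn⟩ := hh n
          rcases hOval (c j * Ring.inverse (c n)) (K.mul_mem (hc j) (hK.2 _ (hc n) (hh n) hcn0))
            hjn.ne_zero ⟨_, 𝒜.mul_mem hgj (inv_mem 𝒜 hgn hun)⟩ with h | h
          · exact h
          · refine absurd ?_ hn0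
            convert h using 1
            apply hjn.mul_left_cancel
            rw [Ring.mul_inverse_cancel _ hjn]
            linear_combination (c j * Ring.inverse (c j)) * hn1 + hj1
        refine ⟨n, by omega, hcn0, fun i hi => ?_⟩
        rcases Nat.lt_succ_iff_lt_or_eq.1 hi with h | rfl
        · have := O.mul_mem (hjm i h) hmem
          convert this using 1
          linear_combination (-(c i * Ring.inverse (c n))) * hj1
        · rw [hn1]; exact O.one_mem
    · obtain ⟨i, hi, hi0⟩ := hne
      have hin : i = n := by
        rcases Nat.lt_succ_iff_lt_or_eq.1 hi with h | h
        · exact absurd ⟨i, h, hi0⟩ hne'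
        · exact h
      subst hin
      have hn1 := Ring.mul_inverse_cancel _ (hL.2 _ (hh i) hi0)
      refine ⟨i, hi, hi0, fun k hk => ?_⟩
      rcases Nat.lt_succ_iff_lt_or_eq.1 hk with h | rfl
      · have : c k = 0 := by
          by_contra h0; exact hne' ⟨k, h, h0⟩
        rw [this, zero_mul]; exact O.zero_mem
      · rw [hn1]; exact O.one_mem

/-- The `u, u⁻¹` lemma. -/
theorem uu (𝒜 : GradedStr G L) (O : Subring L) (p : Set L)
    (hp : IsGradedPrimeOf 𝒜 (gIntClosure 𝒜 O) p) {f : L} {g h : G} (hf : f ∈ 𝒜.deg g)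
    (hu : IsUnit f) (n : ℕ) : ∀ (c : ℕ → L), (∀ i, IsIntegral O (c i)) →
    (∀ i, c i ∈ 𝒜.deg (h * (g ^ i)⁻¹)) → ∑ i ∈ Finset.range (n + 1), c i * f ^ i = 0 →
    (∃ i < n + 1, c i ∉ p) →
    f ∈ gradedLoc 𝒜 (gIntClosure 𝒜 O) p ∨ Ring.inverse f ∈ gradedLoc 𝒜 (gIntClosure 𝒜 O) p := by
  obtain ⟨⟨hpS, hp0, hpadd, hpneg, hpmul, hpcomp⟩, hp1, hpp⟩ := hp
  have hf1 := Ring.mul_inverse_cancel _ hu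
  induction n with
  | zero =>
    rintro c - - hs ⟨i, hi, hip⟩
    have : i = 0 := by omega
    subst this
    simp at hs
    rw [hs] at hip
    exact absurd hp0 hip
  | succ n ih =>
    intro c hci hcd hs hex
    have hcf := integral_lead O (n + 1) c hci hs
    have hcfd : c (n + 1) * f ∈ 𝒜.deg (h * (g ^ n)⁻¹) := by
      have := 𝒜.mul_mem (hcd (n + 1)) hf
      rwa [show h * (g ^ (n + 1))⁻¹ * g = h * (g ^ n)⁻¹ by
        rw [pow_succ, mul_inv, mul_assoc, mul_assoc, inv_mul_cancel, mul_one]] at this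
    have hcS := (ic_homog 𝒜 O (hcd (n + 1))).2 (hci _)
    have hcfS := (ic_homog 𝒜 O hcfd).2 hcf
    by_cases h1 : c (n + 1) ∈ p
    · by_cases h2 : c (n + 1) * f ∈ p
      · refine ih (fun i => if i = n then c n + c (n + 1) * f else c i) ?_ ?_ ?_ ?_
        · intro i
          by_cases hi : i = n
          · simpa [hi] using (hci n).add hcf
          · simpa [hi] using hci i
        · intro i
          by_cases hi : i = n
          · simpa [hi] using (𝒜.deg _).add_mem (hcd n) hcfd
          · simpa [hi] using hcd i
        · rw [Finset.sum_range_succ] at hs ⊢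
          rw [Finset.sum_range_succ] at hs
          have : ∑ x ∈ Finset.range n, (if x = n then c n + c (n + 1) * f else c x) * f ^ x
              = ∑ x ∈ Finset.range n, c x * f ^ x := by
            refine Finset.sum_congr rfl fun i hi => ?_
            rw [if_neg (by have := Finset.mem_range.1 hi; omega)]
          rw [this, if_pos rfl, ← hs]
          ring
        · obtain ⟨i, hi, hip⟩ := hex
          have hin : i ≠ n + 1 := by rintro rfl; exact hip h1
          refine ⟨i, by omega, ?_⟩
          by_cases hi' : i = n
          · subst hi'
            simp only [if_true]
            intro hh
            apply hip
            have := hpadd _ hh _ (hpneg _ h2)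
            simpa using this
          · simpa [hi'] using hip
      · right
        exact ⟨c (n + 1), hcS, c (n + 1) * f, hcfS, ⟨_, hcfd⟩, h2, by
          rw [mul_assoc, hf1, mul_one]⟩
    · left
      exact ⟨c (n + 1) * f, hcfS, c (n + 1), hcS, ⟨_, hcd _⟩, h1, rfl⟩

section main

variable (𝒜 : GradedStr G L) (K O : Subring L) (p : Set L)

theorem isMax (hL : 𝒜.IsGradedField) (hOgr : 𝒜.IsGradedSubring O)
    (hp : IsGradedPrimeOf 𝒜 (gIntClosure 𝒜 O) p)
    (hpO : p ∩ ↑O = gmaxIdeal 𝒜 ↑O)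
    (q : Set L) (hq : IsHomogIdealOf 𝒜 (gIntClosure 𝒜 O) q) (hpq : p ⊆ q) :
    (1 : L) ∈ q ∨ q = p := by
  obtain ⟨⟨hpS, hp0, hpadd, hpneg, hpmul, hpcomp⟩, hp1, hpp⟩ := hp
  obtain ⟨hqS, hq0, hqadd, hqneg, hqmul, hqcomp⟩ := hq
  by_cases hqp : q ⊆ p
  · right; exact hqp.antisymm hpq
  left
  obtain ⟨y, hyq, hyp⟩ := Set.not_subset.1 hqp
  have : ∃ g, 𝒜.comp y g ∉ p := by
    by_contra hcon
    push Not at hcon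
    exact hyp (mem_of_comp 𝒜 ⟨hp0, hpadd⟩ hcon)
  obtain ⟨g, hgp⟩ := this
  have hgq := hqcomp y hyq g
  have hgd := 𝒜.comp_mem y g
  generalize 𝒜.comp y g = x at hgp hgq hgd
  have hxS := hqS hgq
  have hxi := (integralOver_iff O x).2 ((ic_homog 𝒜 O hgd).1 hxS)
  have key : ∀ n (c : ℕ → L), (∀ i, c i ∈ O) → (∀ i, c i ∈ 𝒜.deg (g ^ n * (g ^ i)⁻¹)) →
      c n = 1 → ∑ i ∈ Finset.range (n + 1), c i * x ^ i ∈ p → (1 : L) ∈ q := by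
    intro n
    induction n with
    | zero =>
      intro c _ _ h1 hs
      simp [h1] at hs
      exact absurd hs hp1
    | succ n ih =>
      intro c hcO hcd hc1 hs
      rw [Finset.sum_range_succ'] at hs
      have hfac : ∑ i ∈ Finset.range (n + 1), c (i + 1) * x ^ (i + 1)
          = x * ∑ i ∈ Finset.range (n + 1), c (i + 1) * x ^ i := by
        rw [Finset.mul_sum]
        exact Finset.sum_congr rfl fun i _ => by ring
      rw [hfac, pow_zero, mul_one] at hs
      have hcd' : ∀ i, c (i + 1) ∈ 𝒜.deg (g ^ n * (g ^ i)⁻¹) := by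
        intro i
        have := hcd (i + 1)
        rwa [show g ^ (n + 1) * (g ^ (i + 1))⁻¹ = g ^ n * (g ^ i)⁻¹ by
          rw [pow_succ, pow_succ, mul_inv, mul_comm (g ^ i)⁻¹, mul_assoc, mul_inv_cancel_left]]
          at this
      have hpowS : ∀ i : ℕ, x ^ i ∈ gIntClosure 𝒜 O := by
        intro i
        rw [ic_homog 𝒜 O (pow_mem 𝒜 hgd i)]
        exact ((ic_homog 𝒜 O hgd).1 hxS).pow i
      have hWS : ∑ i ∈ Finset.range (n + 1), c (i + 1) * x ^ i ∈ gIntClosure 𝒜 O :=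
        sum_mem_of _ (ic_addClosed 𝒜 O) _ _ fun i _ =>
          ic_mul 𝒜 O (ic_of_mem 𝒜 O hOgr (hcO _)) (hpowS i)
      have hWd : ∑ i ∈ Finset.range (n + 1), c (i + 1) * x ^ i ∈ 𝒜.deg (g ^ n) :=
        sum_mem fun i _ => by
          have := 𝒜.mul_mem (hcd' i) (pow_mem 𝒜 hgd i)
          rwa [inv_mul_cancel_right] at this
      by_cases h0 : c 0 ∈ p
      · have hm := hpadd _ hs _ (hpneg _ h0)
        rw [add_neg_cancel_right] at hm
        rcases hpp _ hxS _ hWS ⟨_, hgd⟩ ⟨_, hWd⟩ hm with h | h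
        · exact absurd h hgp
        · exact ih (fun i => c (i + 1)) (fun i => hcO _) hcd' hc1 h
      · have hng : c 0 ∉ gmaxIdeal 𝒜 (O : Set L) := by
          rw [← hpO]; exact fun h => h0 h.1
        rw [gmax_homog 𝒜 _ (hcd 0)] at hng
        push Not at hng
        obtain ⟨hne, hinv⟩ := hng (hcO 0)
        have hq1 := hqmul _ hWS _ hgq
        have hq2 := hqadd _ (hpq hs) _ (hqneg _ hq1)
        have hq3 : c 0 ∈ q := by
          convert hq2 using 1; ring
        have := hqmul _ (ic_of_mem 𝒜 O hOgr hinv) _ hq3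
        rwa [Ring.inverse_mul_cancel _ (hL.2 _ ⟨_, hcd 0⟩ hne)] at this
  obtain ⟨n, c, h1, h2, h3, h4⟩ := exists_homog_eq 𝒜 hOgr hgd hxi
  exact key n c h1 h2 h3 (by rw [h4]; exact hp0)

theorem loc_gvr (hL : 𝒜.IsGradedField) (hK : 𝒜.IsGradedSubfield K)
    (hint : ∀ x : L, 𝒜.IsHomog x → IntegralOver K x)
    (hOval : ∀ f ∈ K, f ≠ 0 → 𝒜.IsHomog f → f ∈ O ∨ Ring.inverse f ∈ O)
    (hp : IsGradedPrimeOf 𝒜 (gIntClosure 𝒜 O) p) :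
    IsGVRing 𝒜 (gradedLoc 𝒜 (gIntClosure 𝒜 O) p) := by
  have hp' := hp
  obtain ⟨⟨hpS, hp0, hpadd, hpneg, hpmul, hpcomp⟩, hp1, hpp⟩ := hp
  have hone : 𝒜.IsHomog (1 : L) := ⟨1, 𝒜.one_mem⟩
  have hst : ∀ {s t : L}, s ∈ gIntClosure 𝒜 O → t ∈ gIntClosure 𝒜 O → 𝒜.IsHomog s →
      𝒜.IsHomog t → s ∉ p → t ∉ p → 𝒜.IsHomog (s * t) ∧ s * t ∉ p := by
    rintro s t hs ht ⟨a, ha⟩ ⟨b, hb⟩ h1 h2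
    exact ⟨⟨_, 𝒜.mul_mem ha hb⟩, fun h =>
      (hpp s hs t ht ⟨a, ha⟩ ⟨b, hb⟩ h).elim h1 h2⟩
  refine ⟨⟨0, ic_zero 𝒜 O, 1, ic_one 𝒜 O, hone, hp1, by simp⟩,
    ⟨1, ic_one 𝒜 O, 1, ic_one 𝒜 O, hone, hp1, by simp⟩, ?_, ?_, ?_, ?_, ?_⟩
  · rintro x ⟨a, ha, s, hs, hsh, hsp, hsx⟩ y ⟨b, hb, t, ht, hth, htp, hty⟩
    obtain ⟨h1, h2⟩ := hst hs ht hsh hth hsp htp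
    exact ⟨t * a + s * b, ic_add 𝒜 O (ic_mul 𝒜 O ht ha) (ic_mul 𝒜 O hs hb), s * t,
      ic_mul 𝒜 O hs ht, h1, h2, by rw [← hsx, ← hty]; ring⟩
  · rintro x ⟨a, ha, s, hs, hsh, hsp, hsx⟩
    exact ⟨-a, ic_neg 𝒜 O ha, s, hs, hsh, hsp, by rw [← hsx]; ring⟩
  · rintro x ⟨a, ha, s, hs, hsh, hsp, hsx⟩ y ⟨b, hb, t, ht, hth, htp, hty⟩
    obtain ⟨h1, h2⟩ := hst hs ht hsh hth hsp htp
    exact ⟨a * b, ic_mul 𝒜 O ha hb, s * t,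
      ic_mul 𝒜 O hs ht, h1, h2, by rw [← hsx, ← hty]; ring⟩
  · rintro x ⟨a, ha, s, hs, ⟨h, hsh⟩, hsp, hsx⟩ g
    refine ⟨𝒜.comp a (h * g), ic_comp 𝒜 O ha _, s, hs, ⟨h, hsh⟩, hsp, ?_⟩
    rw [← hsx, comp_mul_left 𝒜 hsh]
  · rintro f hf0 ⟨g, hfg⟩
    have hu := hL.2 f ⟨g, hfg⟩ hf0
    have := hL.1
    obtain ⟨n, c, hcK, hcd, hc1, hs⟩ := exists_homog_eq 𝒜 hK.1 hfg (hint f ⟨g, hfg⟩)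
    obtain ⟨j, hj, hj0, hjm⟩ := exists_max 𝒜 hL K hK O hOval c hcK (fun i => ⟨_, hcd i⟩) (n + 1)
      ⟨n, by omega, by rw [hc1]; exact one_ne_zero⟩
    have huj := hL.2 _ ⟨_, hcd j⟩ hj0
    have hdj := inv_mem 𝒜 (hcd j) huj
    refine uu 𝒜 O p hp' (h := (g ^ n * (g ^ j)⁻¹)⁻¹ * g ^ n) hfg hu n
      (fun i => if i < n + 1 then c i * Ring.inverse (c j) else 0) ?_ ?_ ?_ ?_
    · intro i
      by_cases hi : i < n + 1
      · simp only [hi, if_true]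
        exact isIntegral_algebraMap (R := O) (x := ⟨_, hjm i hi⟩)
      · simp only [hi, if_false]; exact isIntegral_zero
    · intro i
      by_cases hi : i < n + 1
      · simp only [hi, if_true]
        have := 𝒜.mul_mem hdj (hcd i)
        rwa [← mul_assoc, mul_comm (Ring.inverse _)] at this
      · simp only [hi, if_false]; exact (𝒜.deg _).zero_mem
    · have : Ring.inverse (c j) * ∑ i ∈ Finset.range (n + 1), c i * f ^ i = 0 := by
        rw [hs, mul_zero]
      rw [← this, Finset.mul_sum]
      refine Finset.sum_congr rfl fun i hi => ?_
      rw [if_pos (Finset.mem_range.1 hi)]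
      ring
    · refine ⟨j, hj, ?_⟩
      rw [if_pos hj, Ring.mul_inverse_cancel _ huj]
      exact hp1

theorem loc_contr (hL : 𝒜.IsGradedField)
    (hp : IsGradedPrimeOf 𝒜 (gIntClosure 𝒜 O) p) :
    gmaxIdeal 𝒜 (gradedLoc 𝒜 (gIntClosure 𝒜 O) p) ∩ gIntClosure 𝒜 O = p := by
  obtain ⟨⟨hpS, hp0, hpadd, hpneg, hpmul, hpcomp⟩, hp1, hpp⟩ := hp
  ext x
  constructor
  · rintro ⟨⟨_, h⟩, hxS⟩
    refine mem_of_comp 𝒜 ⟨hp0, hpadd⟩ fun g => ?_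
    by_contra hg
    have hne : 𝒜.comp x g ≠ 0 := by intro h0; rw [h0] at hg; exact hg hp0
    have hh : 𝒜.IsHomog (𝒜.comp x g) := ⟨g, 𝒜.comp_mem x g⟩
    exact h g hne ⟨1, ic_one 𝒜 O, _, ic_comp 𝒜 O hxS g, hh, hg,
      Ring.mul_inverse_cancel _ (hL.2 _ hh hne)⟩
  · intro hx
    refine ⟨⟨⟨x, hpS hx, 1, ic_one 𝒜 O, ⟨1, 𝒜.one_mem⟩, hp1, one_mul x⟩, ?_⟩, hpS hx⟩
    rintro g hne ⟨a, ha, s, hs, hsh, hsp, hsx⟩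
    have hu := hL.2 _ ⟨g, 𝒜.comp_mem x g⟩ hne
    apply hsp
    have := hpmul a ha _ (hpcomp x hx g)
    rwa [← hsx, mul_assoc, Ring.inverse_mul_cancel _ hu, mul_one] at this

theorem dominating (hL : 𝒜.IsGradedField) (hK : 𝒜.IsGradedSubfield K)
    (hint : ∀ x : L, 𝒜.IsHomog x → IntegralOver K x)
    (hOgr : 𝒜.IsGradedSubring O)
    (hOval : ∀ f ∈ K, f ≠ 0 → 𝒜.IsHomog f → f ∈ O ∨ Ring.inverse f ∈ O)
    (O'' : Set L) (hV : IsGVRing 𝒜 O'') (hOV : ↑O ⊆ O'')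
    (hdom : gmaxIdeal 𝒜 O'' ∩ ↑O = gmaxIdeal 𝒜 ↑O) :
      ∃ p : Set L, IsGradedPrimeOf 𝒜 (gIntClosure 𝒜 O) p ∧
        p ∩ ↑O = gmaxIdeal 𝒜 ↑O ∧ O'' = gradedLoc 𝒜 (gIntClosure 𝒜 O) p := by
  obtain ⟨hV0, hV1, hVadd, hVneg, hVmul, hVcomp, hVval⟩ := hV
  have := hL.1
  have hVac : AddClosed O'' := ⟨hV0, hVadd⟩
  have hVpow : ∀ {x : L}, x ∈ O'' → ∀ n : ℕ, x ^ n ∈ O'' := by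
    intro x hx n
    induction n with
    | zero => simpa using hV1
    | succ n ih => rw [pow_succ]; exact hVmul _ ih _ hx
  -- the integral closure is contained in O''
  have hSV : gIntClosure 𝒜 O ⊆ O'' := by
    intro y hy
    refine mem_of_comp 𝒜 hVac fun g => ?_
    have hd := 𝒜.comp_mem y g
    have hi := hy g
    generalize 𝒜.comp y g = x at hd hi
    by_cases hx0 : x = 0
    · rw [hx0]; exact hV0
    rcases hVval x hx0 ⟨g, hd⟩ with h | h
    · exact h
    have hu := hL.2 x ⟨g, hd⟩ hx0
    have hx1 := Ring.mul_inverse_cancel _ hu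
    obtain ⟨n, c, hcO, -, hc1, hs⟩ := exists_homog_eq 𝒜 hOgr hd hi
    cases n with
    | zero => simp [hc1] at hs
    | succ n =>
      rw [Finset.sum_range_succ, hc1, one_mul] at hs
      have hpw : x ^ n * Ring.inverse x ^ n = 1 := by rw [← mul_pow, hx1, one_pow]
      have : x = -∑ i ∈ Finset.range (n + 1), c i * Ring.inverse x ^ (n - i) := by
        have h1 : ∑ i ∈ Finset.range (n + 1), c i * Ring.inverse x ^ (n - i) =
            (∑ i ∈ Finset.range (n + 1), c i * x ^ i) * Ring.inverse x ^ n := by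
          rw [Finset.sum_mul]
          refine Finset.sum_congr rfl fun i hi => ?_
          have hin : i ≤ n := by have := Finset.mem_range.1 hi; omega
          have : x ^ i * Ring.inverse x ^ n = Ring.inverse x ^ (n - i) := by
            have hsplit : Ring.inverse x ^ n = Ring.inverse x ^ i * Ring.inverse x ^ (n - i) := by
              rw [← pow_add, Nat.add_sub_cancel' hin]
            rw [hsplit, ← mul_assoc, ← mul_pow, hx1, one_pow, one_mul]
          rw [mul_assoc, this]
        rw [h1]
        linear_combination (-x) * hpw + (Ring.inverse x ^ n) * hs
      rw [this]
      exact hVneg _ (sum_mem_of _ hVac _ _ fun i _ => hVmul _ (hOV (hcO i)) _ (hVpow h _))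
  -- properties of the graded maximal ideal
  have hMadd : ∀ x ∈ gmaxIdeal 𝒜 O'', ∀ y ∈ gmaxIdeal 𝒜 O'', x + y ∈ gmaxIdeal 𝒜 O'' := by
    rintro x ⟨hx, hx'⟩ y ⟨hy, hy'⟩
    refine ⟨hVadd _ hx _ hy, fun g => ?_⟩
    rw [𝒜.comp_add]
    have hxd := 𝒜.comp_mem x g
    have hyd := 𝒜.comp_mem y g
    have hxV := hVcomp x hx g
    have hyV := hVcomp y hy g
    have hx' := hx' g
    have hy' := hy' g
    generalize 𝒜.comp x g = a at *
    generalize 𝒜.comp y g = b at *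
    intro hz hzV
    by_cases ha0 : a = 0
    · rw [ha0, zero_add] at hz hzV; exact hy' hz hzV
    by_cases hb0 : b = 0
    · rw [hb0, add_zero] at hz hzV; exact hx' hz hzV
    have hua := hL.2 a ⟨_, hxd⟩ ha0
    have hub := hL.2 b ⟨_, hyd⟩ hb0
    have hz1 := Ring.mul_inverse_cancel _ (hL.2 (a + b) ⟨_, (𝒜.deg g).add_mem hxd hyd⟩ hz)
    have ha1 := Ring.mul_inverse_cancel _ hua
    have hb1 := Ring.mul_inverse_cancel _ hub
    have huab : IsUnit (a * Ring.inverse b) := hua.mul hub.ringInverse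
    rcases hVval (a * Ring.inverse b) huab.ne_zero
      ⟨_, 𝒜.mul_mem hxd (inv_mem 𝒜 hyd hub)⟩ with h | h
    · apply hy' hb0
      have := hVmul _ (hVadd _ h _ hV1) _ hzV
      convert this using 1
      linear_combination (-Ring.inverse b) * hz1 + Ring.inverse (a + b) * hb1
    · have hba : Ring.inverse (a * Ring.inverse b) = b * Ring.inverse a := by
        apply huab.mul_left_cancel
        rw [Ring.mul_inverse_cancel _ huab]
        linear_combination (-(a * Ring.inverse a)) * hb1 - ha1
      rw [hba] at h
      apply hx' ha0
      have := hVmul _ (hVadd _ h _ hV1) _ hzV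
      convert this using 1
      linear_combination (-Ring.inverse a) * hz1 + Ring.inverse (a + b) * ha1
  have hM0 : (0 : L) ∈ gmaxIdeal 𝒜 O'' :=
    ⟨hV0, fun g h => absurd (comp_zero 𝒜 g) h⟩
  have hMcomp : ∀ x ∈ gmaxIdeal 𝒜 O'', ∀ g, 𝒜.comp x g ∈ gmaxIdeal 𝒜 O'' := by
    intro x hx g
    rw [gmax_homog 𝒜 _ (𝒜.comp_mem x g)]
    exact ⟨hVcomp x hx.1 g, hx.2 g⟩
  have hMmul : ∀ s ∈ O'', ∀ x ∈ gmaxIdeal 𝒜 O'', s * x ∈ gmaxIdeal 𝒜 O'' := by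
    intro s hs x hx
    refine mul_mem_of_comp 𝒜 ⟨hM0, hMadd⟩ fun g k => ?_
    have hxk := hMcomp x hx k
    have hxd := 𝒜.comp_mem x k
    have hsd := 𝒜.comp_mem s g
    have hsV := hVcomp s hs g
    generalize 𝒜.comp x k = b at *
    generalize 𝒜.comp s g = a at *
    rw [gmax_homog 𝒜 _ hxd] at hxk
    rw [gmax_homog 𝒜 _ (𝒜.mul_mem hsd hxd)]
    refine ⟨hVmul _ hsV _ hxk.1, fun hne hinv => ?_⟩
    have hb0 : b ≠ 0 := right_ne_zero_of_mul hne
    have hub := hL.2 b ⟨_, hxd⟩ hb0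
    have h1 := Ring.mul_inverse_cancel _ (hL.2 _ ⟨_, 𝒜.mul_mem hsd hxd⟩ hne)
    apply hxk.2 hb0
    have := hVmul _ hsV _ hinv
    convert this using 1
    apply hub.mul_left_cancel
    rw [Ring.mul_inverse_cancel _ hub]
    linear_combination -h1
  have hMneg : ∀ x ∈ gmaxIdeal 𝒜 O'', -x ∈ gmaxIdeal 𝒜 O'' := by
    intro x hx
    have := hMmul (-1) (hVneg _ hV1) x hx
    simpa using this
  have hM1 : (1 : L) ∉ gmaxIdeal 𝒜 O'' := by
    rw [gmax_homog 𝒜 _ 𝒜.one_mem]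
    rintro ⟨-, h⟩
    exact h one_ne_zero (by simpa using hV1)
  have hunit : ∀ s ∈ O'', 𝒜.IsHomog s → s ∉ gmaxIdeal 𝒜 O'' →
      s ≠ 0 ∧ Ring.inverse s ∈ O'' := by
    rintro s hs ⟨g, hg⟩ hsM
    rw [gmax_homog 𝒜 _ hg] at hsM
    push Not at hsM
    exact hsM hs
  have hprime : IsGradedPrimeOf 𝒜 (gIntClosure 𝒜 O) (gmaxIdeal 𝒜 O'' ∩ gIntClosure 𝒜 O) := by
    refine ⟨⟨Set.inter_subset_right, ⟨hM0, ic_zero 𝒜 O⟩, ?_, ?_, ?_, ?_⟩, fun h => hM1 h.1, ?_⟩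
    · exact fun x hx y hy => ⟨hMadd x hx.1 y hy.1, ic_add 𝒜 O hx.2 hy.2⟩
    · exact fun x hx => ⟨hMneg x hx.1, ic_neg 𝒜 O hx.2⟩
    · exact fun s hs x hx => ⟨hMmul s (hSV hs) x hx.1, ic_mul 𝒜 O hs hx.2⟩
    · exact fun x hx g => ⟨hMcomp x hx.1 g, ic_comp 𝒜 O hx.2 g⟩
    · intro a ha b hb hah hbh hab
      by_contra hcon
      push Not at hcon
      have haM : a ∉ gmaxIdeal 𝒜 O'' := fun h => hcon.1 ⟨h, ha⟩
      have hbM : b ∉ gmaxIdeal 𝒜 O'' := fun h => hcon.2 ⟨h, hb⟩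
      obtain ⟨ha0, hai⟩ := hunit a (hSV ha) hah haM
      obtain ⟨hb0, hbi⟩ := hunit b (hSV hb) hbh hbM
      have ha1 := Ring.mul_inverse_cancel _ (hL.2 a hah ha0)
      have hb1 := Ring.mul_inverse_cancel _ (hL.2 b hbh hb0)
      apply hM1
      have := hMmul _ (hVmul _ hai _ hbi) _ hab.1
      convert this using 1
      linear_combination (-(b * Ring.inverse b)) * ha1 - hb1
  refine ⟨gmaxIdeal 𝒜 O'' ∩ gIntClosure 𝒜 O, hprime, ?_, ?_⟩
  · rw [← hdom]
    ext x
    exact ⟨fun h => ⟨h.1.1, h.2⟩, fun h => ⟨⟨h.1, ic_of_mem 𝒜 O hOgr h.2⟩, h.2⟩⟩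
  have hW := loc_gvr 𝒜 K O _ hL hK hint hOval hprime
  have hsub : gradedLoc 𝒜 (gIntClosure 𝒜 O) (gmaxIdeal 𝒜 O'' ∩ gIntClosure 𝒜 O) ⊆ O'' := by
    rintro x ⟨a, ha, s, hs, hsh, hsp, hsx⟩
    obtain ⟨hs0, hsi⟩ := hunit s (hSV hs) hsh fun h => hsp ⟨h, hs⟩
    have := hVmul _ hsi _ (hSV ha)
    rwa [← hsx, ← mul_assoc, Ring.inverse_mul_cancel _ (hL.2 s hsh hs0), one_mul] at this
  refine Set.Subset.antisymm ?_ hsub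
  intro y hy
  refine mem_of_comp 𝒜 ⟨hW.1, hW.2.2.1⟩ fun g => ?_
  have hd := 𝒜.comp_mem y g
  have hxV := hVcomp y hy g
  generalize 𝒜.comp y g = x at hd hxV
  by_cases hx0 : x = 0
  · rw [hx0]; exact hW.1
  rcases hW.2.2.2.2.2.2 x hx0 ⟨g, hd⟩ with h | h
  · exact h
  obtain ⟨a, ha, s, hs, ⟨k, hsk⟩, hsp, hsx⟩ := h
  have hu := hL.2 x ⟨g, hd⟩ hx0
  have hsax : a * x = s := by
    rw [← hsx, mul_assoc, Ring.inverse_mul_cancel _ hu, mul_one]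
  refine ⟨s, hs, a, ha, ⟨_, hsx ▸ 𝒜.mul_mem hsk (inv_mem 𝒜 hd hu)⟩, fun hap => ?_, hsax⟩
  apply hsp
  refine ⟨?_, hs⟩
  rw [← hsax, mul_comm]
  exact hMmul x hxV a hap.1

end main

end GVHelp

/-- Let `K'/K` be an integral extension of `G`-graded fields, `O` a
graded valuation ring of `K`, and `O'` the graded integral closure of `O` in `K'`.
Every graded prime ideal `m'` of `O'` over the graded maximal ideal `m_O` of `O` is a
graded maximal ideal; for each such `m'` the graded localization `O'_{m'}` is a graded
valuation ring of `K'` whose graded maximal ideal contracts to `m'` in `O'`; and every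
graded valuation ring of `K'` dominating `O` arises in this way. -/
theorem graded_valuation_rings_of_integral_extension
    (𝒜 : GradedStr G L) (hL : 𝒜.IsGradedField)
    (K : Subring L) (hK : 𝒜.IsGradedSubfield K)
    (hint : ∀ x : L, 𝒜.IsHomog x → IntegralOver K x)
    (O : Subring L) (hOK : O ≤ K) (hOgr : 𝒜.IsGradedSubring O)
    (hOval : ∀ f ∈ K, f ≠ 0 → 𝒜.IsHomog f → f ∈ O ∨ Ring.inverse f ∈ O) :
    (∀ p : Set L, IsGradedPrimeOf 𝒜 (gIntClosure 𝒜 O) p →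
      p ∩ ↑O = gmaxIdeal 𝒜 ↑O →
      ((∀ q : Set L, IsHomogIdealOf 𝒜 (gIntClosure 𝒜 O) q → p ⊆ q →
          (1 : L) ∈ q ∨ q = p) ∧
        IsGVRing 𝒜 (gradedLoc 𝒜 (gIntClosure 𝒜 O) p) ∧
        gmaxIdeal 𝒜 (gradedLoc 𝒜 (gIntClosure 𝒜 O) p) ∩ gIntClosure 𝒜 O = p)) ∧
    (∀ O'' : Set L, IsGVRing 𝒜 O'' → ↑O ⊆ O'' →
      gmaxIdeal 𝒜 O'' ∩ ↑O = gmaxIdeal 𝒜 ↑O →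
      ∃ p : Set L, IsGradedPrimeOf 𝒜 (gIntClosure 𝒜 O) p ∧
        p ∩ ↑O = gmaxIdeal 𝒜 ↑O ∧ O'' = gradedLoc 𝒜 (gIntClosure 𝒜 O) p) := by
  refine ⟨fun p hp hpO => ⟨fun q hq hpq => GVHelp.isMax 𝒜 O p hL hOgr hp hpO q hq hpq,
    GVHelp.loc_gvr 𝒜 K O p hL hK hint hOval hp, GVHelp.loc_contr 𝒜 O p hL hp⟩,
    fun O'' hV hOV hdom => GVHelp.dominating 𝒜 K O hL hK hint hOgr hOval O'' hV hOV hdom⟩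

end Statement10
end
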